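/- Let W be any simple-dispersion DMC, i.e., 0 < V_min = V_max. Then for every ε ∈ (0,1), limsup_{n→∞} (log M*_fb(n, ε) − nC)/√n ≤ √(V_min)·Φ^{-1}(ε) = √(V_ε)·Φ^{-1}(ε). In other words, feedback does not improve the second-order coding rate of simple-dispersion channels. -/

import Mathlib

open MeasureTheory Real Filter Set
open scoped BigOperators ENNReal Classical

noncomputable section

namespace Paper

variable {X Y : Type*} [Fintype X] [Fintype Y]

/-- `P` is a probability mass function on the finite alphabet `X`. -/
def IsDist (P : X → ℝ) : Prop := (∀ x, 0 ≤ P x) ∧ ∑ x, P x = 1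

/-- `W` is a discrete memoryless channel (a stochastic matrix). -/
def IsChannel (W : X → Y → ℝ) : Prop := ∀ x, IsDist (W x)

/-- `W` has no all-zero column. -/
def NoZeroColumn (W : X → Y → ℝ) : Prop := ∀ y, ∃ x, 0 < W x y

/-- Output distribution induced by input distribution `P` through `W`. -/
def outDist (P : X → ℝ) (W : X → Y → ℝ) (y : Y) : ℝ := ∑ x, P x * W x y

/-- Mutual information `I(P; W)` (in nats). -/
def mutInfo (P : X → ℝ) (W : X → Y → ℝ) : ℝ :=
  ∑ x, ∑ y, P x * W x y * Real.log (W x y / outDist P W y)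

/-- Shannon capacity `C`. -/
def capacity (W : X → Y → ℝ) : ℝ :=
  sSup {c | ∃ P, IsDist P ∧ mutInfo P W = c}

/-- The set of capacity-achieving input distributions `Π*`. -/
def capacityAchievers (W : X → Y → ℝ) : Set (X → ℝ) :=
  {P | IsDist P ∧ mutInfo P W = capacity W}

/-- The (unique) capacity-achieving output distribution `q*`. -/
def qStar (W : X → Y → ℝ) : Y → ℝ :=
  if h : (capacityAchievers W).Nonempty then outDist h.choose W else fun _ => 0

/-- The information density `i*(x,y) = log (W(y|x)/q*(y))`. -/
def iStar (W : X → Y → ℝ) (x : X) (y : Y) : ℝ := Real.log (W x y / qStar W y)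

/-- `ν_x = Var[i*(x,Y)]`, `Y ~ W(·|x)`. -/
def nu (W : X → Y → ℝ) (x : X) : ℝ :=
  ∑ y, W x y * (iStar W x y) ^ 2 - (∑ y, W x y * iStar W x y) ^ 2

/-- `V_min`. -/
def Vmin (W : X → Y → ℝ) : ℝ :=
  sInf {v | ∃ P ∈ capacityAchievers W, v = ∑ x, P x * nu W x}

/-- `V_max`. -/
def Vmax (W : X → Y → ℝ) : ℝ :=
  sSup {v | ∃ P ∈ capacityAchievers W, v = ∑ x, P x * nu W x}

/-- `V_ε`. -/
def Veps (W : X → Y → ℝ) (ε : ℝ) : ℝ := if ε < 1/2 then Vmin W else Vmax W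

/-- `ν_min = min_x ν_x`. -/
def numin (W : X → Y → ℝ) [Nonempty X] : ℝ := ⨅ x, nu W x

/-- `ν_max = max_x ν_x`. -/
def numax (W : X → Y → ℝ) [Nonempty X] : ℝ := ⨆ x, nu W x

/-- Average error probability of the feedback code `(enc, dec)` with `M` messages
and blocklength `n`. -/
def errProb (W : X → Y → ℝ) (n M : ℕ) (enc : Fin M → List Y → X)
    (dec : (Fin n → Y) → Fin M) : ℝ :=
  (M : ℝ)⁻¹ * ∑ m : Fin M, ∑ y : Fin n → Y,
    (∏ k : Fin n, W (enc m ((List.ofFn y).take (k : ℕ))) (y k)) *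
      (if dec y = m then 0 else 1)

/-- Minimum average error probability of `(n,R)` feedback codes. -/
def minErr (W : X → Y → ℝ) (n : ℕ) (R : ℝ) : ℝ :=
  sInf {e | ∃ enc dec, e = errProb W n ⌈Real.exp (n * R)⌉₊ enc dec}

/-- `M*_fb(n, ε)`. -/
def Mfb (W : X → Y → ℝ) (n : ℕ) (ε : ℝ) : ℝ :=
  sSup {m | ∃ R : ℝ, m = (⌈Real.exp (n * R)⌉₊ : ℝ) ∧ minErr W n R ≤ ε}

/-- Standard Gaussian density `φ`. -/
def gpdf (u : ℝ) : ℝ := (Real.sqrt (2 * Real.pi))⁻¹ * Real.exp (-u ^ 2 / 2)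

/-- Standard Gaussian CDF `Φ`. -/
def gcdf (t : ℝ) : ℝ := ∫ u in Set.Iic t, gpdf u

/-- Inverse Gaussian CDF `Φ⁻¹`. -/
def gcdfInv : ℝ → ℝ := Function.invFun gcdf

/-- The sequence `(log M*_fb(n,ε) - nC)/√n` whose liminf/limsup is the
second-order coding rate with feedback. -/
def SOfb (W : X → Y → ℝ) (ε : ℝ) (n : ℕ) : ℝ :=
  (Real.log (Mfb W n ε) - n * capacity W) / Real.sqrt n


/-! ### Information-theoretic preliminaries -/

/-- The relative entropy `D(W_x ‖ q)`. -/
def relDiv (W : X → Y → ℝ) (q : Y → ℝ) (x : X) : ℝ :=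
  ∑ y, W x y * Real.log (W x y / q y)

omit [Fintype Y] in
lemma outDist_nonneg {P : X → ℝ} {W : X → Y → ℝ} (hP : IsDist P) (hW : ∀ x y, 0 ≤ W x y) (y : Y) :
    0 ≤ outDist P W y :=
  Finset.sum_nonneg fun x _ => mul_nonneg (hP.1 x) (hW x y)

lemma sum_outDist {P : X → ℝ} {W : X → Y → ℝ} (hP : IsDist P) (hW : IsChannel W) :
    ∑ y, outDist P W y = 1 := by
  unfold outDist
  rw [Finset.sum_comm]
  simp_rw [← Finset.mul_sum, (hW _).2, mul_one]
  exact hP.2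

omit [Fintype Y] in
lemma le_outDist {P : X → ℝ} {W : X → Y → ℝ} (hP : IsDist P) (hW : ∀ x y, 0 ≤ W x y)
    (x : X) (y : Y) : P x * W x y ≤ outDist P W y :=
  Finset.single_le_sum (f := fun x => P x * W x y)
    (fun x _ => mul_nonneg (hP.1 x) (hW x y)) (Finset.mem_univ x)

lemma IsDist.le_one {P : X → ℝ} (hP : IsDist P) (x : X) : P x ≤ 1 :=
  hP.2 ▸ Finset.single_le_sum (f := P) (fun x _ => hP.1 x) (Finset.mem_univ x)

lemma mutInfo_eq_sum_relDiv (P : X → ℝ) (W : X → Y → ℝ) :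
    mutInfo P W = ∑ x, P x * relDiv W (outDist P W) x := by
  simp only [mutInfo, relDiv, Finset.mul_sum, mul_assoc]

lemma bddAbove_mutInfo {W : X → Y → ℝ} (hW : IsChannel W) :
    BddAbove {c | ∃ P, IsDist P ∧ mutInfo P W = c} := by
  refine ⟨∑ _x : X, ∑ _y : Y, 1, ?_⟩
  rintro _ ⟨P, hP, rfl⟩
  refine Finset.sum_le_sum fun x _ => Finset.sum_le_sum fun y _ => ?_
  have hWn : ∀ x y, 0 ≤ W x y := fun x y => (hW x).1 y
  rcases (hP.1 x).eq_or_lt with h0 | hp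
  · simp [← h0]
  rcases (hWn x y).eq_or_lt with h0 | hw
  · simp [← h0]
  have hpw : 0 < P x * W x y := mul_pos hp hw
  have hq := le_outDist hP hWn x y
  have hq0 : 0 < outDist P W y := hpw.trans_le hq
  have h1 : Real.log (W x y / outDist P W y) ≤ 1 / P x := by
    refine (Real.log_le_self (by positivity)).trans ?_
    rw [div_le_div_iff₀ hq0 hp]
    linarith
  calc P x * W x y * Real.log (W x y / outDist P W y) ≤ P x * W x y * (1 / P x) := by gcongr
    _ = W x y := by field_simp
    _ ≤ 1 := (hW x).le_one y

lemma mutInfo_le_capacity {W : X → Y → ℝ} (hW : IsChannel W) {P : X → ℝ} (hP : IsDist P) :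
    mutInfo P W ≤ capacity W :=
  le_csSup (bddAbove_mutInfo hW) ⟨P, hP, rfl⟩

/-- Replacing the output distribution by another one increases the average divergence. -/
lemma mutInfo_le_sum_relDiv {W : X → Y → ℝ} (hW : IsChannel W) {P : X → ℝ} (hP : IsDist P)
    {q : Y → ℝ} (hq0 : ∀ y, 0 ≤ q y) (hq1 : ∑ y, q y ≤ 1)
    (hq : ∀ y, 0 < outDist P W y → 0 < q y) :
    mutInfo P W ≤ ∑ x, P x * relDiv W q x := by
  have hWn : ∀ x y, 0 ≤ W x y := fun x y => (hW x).1 y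
  have hterm : ∀ x y, P x * W x y * Real.log (W x y / outDist P W y) ≤
      P x * W x y * Real.log (W x y / q y) + P x * W x y * (q y / outDist P W y - 1) := by
    intro x y
    rcases (hP.1 x).eq_or_lt with h0 | hp
    · simp [← h0]
    rcases (hWn x y).eq_or_lt with h0 | hw
    · simp [← h0]
    have hpw : 0 < P x * W x y := mul_pos hp hw
    have ho : 0 < outDist P W y := hpw.trans_le (le_outDist hP hWn x y)
    have hqy := hq y ho
    rw [← mul_add]
    refine mul_le_mul_of_nonneg_left ?_ hpw.le
    have h1 := Real.log_le_sub_one_of_pos (div_pos hqy ho)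
    rw [Real.log_div hw.ne' ho.ne', Real.log_div hw.ne' hqy.ne']
    rw [Real.log_div hqy.ne' ho.ne'] at h1
    linarith
  have hsum : ∑ x, ∑ y, P x * W x y * (q y / outDist P W y - 1) ≤ 0 := by
    rw [Finset.sum_comm]
    have : ∀ y, ∑ x, P x * W x y * (q y / outDist P W y - 1) ≤ q y - outDist P W y := by
      intro y
      rw [← Finset.sum_mul]
      change outDist P W y * (q y / outDist P W y - 1) ≤ _
      rcases (outDist_nonneg hP hWn y).eq_or_lt with h0 | ho
      · rw [← h0]; simpa using hq0 y
      · rw [mul_sub, mul_div_cancel₀ _ ho.ne', mul_one]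
    refine (Finset.sum_le_sum fun y _ => this y).trans ?_
    rw [Finset.sum_sub_distrib, sum_outDist hP hW]
    linarith
  calc mutInfo P W ≤ ∑ x, ∑ y, (P x * W x y * Real.log (W x y / q y) +
        P x * W x y * (q y / outDist P W y - 1)) :=
        Finset.sum_le_sum fun x _ => Finset.sum_le_sum fun y _ => hterm x y
    _ ≤ ∑ x, ∑ y, P x * W x y * Real.log (W x y / q y) := by
        simp only [Finset.sum_add_distrib]; linarith
    _ = _ := by simp only [relDiv, Finset.mul_sum, mul_assoc]

lemma relDiv_mix_le_capacity {W : X → Y → ℝ} (hW : IsChannel W) {P : X → ℝ} (hP : IsDist P)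
    (hPC : mutInfo P W = capacity W) (x : X) {r : ℝ} (hr0 : 0 < r) (hr1 : r < 1) :
    relDiv W (fun y => (1 - r) * outDist P W y + r * W x y) x ≤ capacity W := by
  have hWn : ∀ x y, 0 ≤ W x y := fun x y => (hW x).1 y
  set q : Y → ℝ := fun y => (1 - r) * outDist P W y + r * W x y with hqdef
  set P' : X → ℝ := fun x' => (1 - r) * P x' + r * (if x' = x then 1 else 0) with hP'def
  have hP' : IsDist P' := by
    refine ⟨fun x' => ?_, ?_⟩
    · have := hP.1 x'
      have h1 : 0 ≤ 1 - r := by linarith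
      simp only [hP'def]
      split_ifs <;> positivity
    · simp [hP'def, Finset.sum_add_distrib, ← Finset.mul_sum, hP.2]
  have hout : outDist P' W = q := by
    funext y
    simp [outDist, hP'def, hqdef, add_mul, Finset.sum_add_distrib, mul_assoc, Finset.mul_sum]
  have hq0 : ∀ y, 0 ≤ q y := fun y => hout ▸ outDist_nonneg hP' hWn y
  have h1 := mutInfo_le_sum_relDiv hW hP hq0 (by rw [← hout, sum_outDist hP' hW]) (by
    intro y hy
    have := hWn x y
    have h1 : 0 < 1 - r := by linarith
    simp only [hqdef]
    positivity)
  have h2 := mutInfo_le_capacity hW hP'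
  rw [mutInfo_eq_sum_relDiv, hout] at h2
  have h3 : ∑ x', P' x' * relDiv W q x' = (1 - r) * ∑ x', P x' * relDiv W q x' +
      r * relDiv W q x := by
    simp [hP'def, add_mul, Finset.sum_add_distrib, mul_assoc, Finset.mul_sum]
  rw [h3] at h2
  rw [hPC] at h1
  nlinarith

lemma outDist_pos_of_achiever {W : X → Y → ℝ} (hW : IsChannel W) (hcol : NoZeroColumn W)
    {P : X → ℝ} (hP : IsDist P) (hPC : mutInfo P W = capacity W) (y : Y) :
    0 < outDist P W y := by
  have hWn : ∀ x y, 0 ≤ W x y := fun x y => (hW x).1 y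
  by_contra hneg
  have h0 : outDist P W y = 0 := le_antisymm (not_lt.1 hneg) (outDist_nonneg hP hWn y)
  obtain ⟨x, hx⟩ := hcol y
  set K : ℝ := |capacity W| + Fintype.card Y + 1 with hK
  have hKpos : 0 < K := by positivity
  set r : ℝ := Real.exp (-(K / W x y)) with hr
  have hr0 : 0 < r := Real.exp_pos _
  have hr1 : r < 1 := by
    rw [hr, Real.exp_lt_one_iff]
    have : 0 < K / W x y := by positivity
    linarith
  have h := relDiv_mix_le_capacity hW hP hPC x hr0 hr1
  set q : Y → ℝ := fun y => (1 - r) * outDist P W y + r * W x y with hqdef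
  have hterm : ∀ y', -1 + (if y' = y then K else 0) ≤ W x y' * Real.log (W x y' / q y') := by
    intro y'
    have hw1 := (hW x).le_one y'
    rcases (hWn x y').eq_or_lt with hw | hw
    · have : y' ≠ y := by rintro rfl; exact hx.ne hw
      simp [← hw, this]
    have ho := outDist_nonneg hP hWn y'
    have hq0 : 0 < q y' := by
      have h1 : 0 < 1 - r := by linarith
      simp only [hqdef]
      positivity
    by_cases hy : y' = y
    · subst hy
      have : q y' = r * W x y' := by simp [hqdef, h0]
      rw [this, div_mul_cancel_right₀ hw.ne', Real.log_inv, hr, Real.log_exp, neg_neg,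
        mul_div_cancel₀ _ hw.ne', if_pos rfl]
      linarith
    · rw [if_neg hy, add_zero]
      have h1 := Real.log_le_sub_one_of_pos (div_pos hq0 hw)
      rw [← inv_div, Real.log_inv] 
      have h2 : W x y' * Real.log (q y' / W x y') ≤ W x y' * (q y' / W x y' - 1) := by gcongr
      rw [mul_sub, mul_div_cancel₀ _ hw.ne'] at h2
      have ho1 : outDist P W y' ≤ 1 := by
        rw [← sum_outDist hP hW]
        exact Finset.single_le_sum (f := outDist P W) (fun y _ => outDist_nonneg hP hWn y)
          (Finset.mem_univ _)
      have hq1 : q y' ≤ 1 := by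
        simp only [hqdef]
        nlinarith
      linarith
  have hs : ∑ y', (-1 + (if y' = y then K else 0)) ≤ relDiv W q x :=
    Finset.sum_le_sum fun y' _ => hterm y'
  simp [Finset.sum_add_distrib] at hs
  have := le_abs_self (capacity W)
  linarith

lemma relDiv_le_capacity {W : X → Y → ℝ} (hW : IsChannel W) (hcol : NoZeroColumn W)
    {P : X → ℝ} (hP : IsDist P) (hPC : mutInfo P W = capacity W) (x : X) :
    relDiv W (outDist P W) x ≤ capacity W := by
  have hpos := outDist_pos_of_achiever hW hcol hP hPC
  have hc : ContinuousAt (fun r : ℝ =>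
      relDiv W (fun y => (1 - r) * outDist P W y + r * W x y) x) 0 := by
    unfold relDiv
    refine tendsto_finsetSum _ fun y _ => ?_
    rcases ((hW x).1 y).eq_or_lt with hw | hw
    · simp [← hw]
    refine ContinuousAt.mul continuousAt_const (ContinuousAt.log (ContinuousAt.div
      continuousAt_const (by fun_prop) ?_) ?_)
    · simpa using (hpos y).ne'
    · simpa using ⟨hw.ne', (hpos y).ne'⟩
  have hc' := hc.tendsto.mono_left (nhdsWithin_le_nhds (s := Set.Ioi 0))
  simp only [sub_zero, one_mul, zero_mul, add_zero] at hc'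
  refine le_of_tendsto hc' ?_
  filter_upwards [Ioo_mem_nhdsGT (zero_lt_one (α := ℝ))] with r hr
  exact relDiv_mix_le_capacity hW hP hPC x hr.1 hr.2

lemma exists_achiever_qStar {W : X → Y → ℝ} (hVmin : 0 < Vmin W) :
    ∃ P, IsDist P ∧ mutInfo P W = capacity W ∧ qStar W = outDist P W := by
  have hne : (capacityAchievers W).Nonempty := by
    by_contra hne
    rw [Set.not_nonempty_iff_eq_empty] at hne
    simp [Vmin, hne] at hVmin
  exact ⟨hne.choose, hne.choose_spec.1, hne.choose_spec.2, by simp [qStar, hne]⟩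

/-- For a simple-dispersion channel all capacity achievers have the same dispersion. -/
lemma dispersion_eq_Vmin {W : X → Y → ℝ} (hsimple : Vmin W = Vmax W) {P : X → ℝ}
    (hP : P ∈ capacityAchievers W) : ∑ x, P x * nu W x = Vmin W := by
  have hb : ∀ P ∈ capacityAchievers W, |∑ x, P x * nu W x| ≤ ∑ x, |nu W x| := by
    intro P hP
    refine (Finset.abs_sum_le_sum_abs _ _).trans (Finset.sum_le_sum fun x _ => ?_)
    rw [abs_mul, abs_of_nonneg (hP.1.1 x)]
    exact mul_le_of_le_one_left (abs_nonneg _) (hP.1.le_one x)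
  refine le_antisymm ?_ ?_
  · rw [hsimple]
    refine le_csSup ⟨∑ x, |nu W x|, ?_⟩ ⟨P, hP, rfl⟩
    rintro _ ⟨Q, hQ, rfl⟩
    exact (abs_le.1 (hb Q hQ)).2
  · refine csInf_le ⟨-∑ x, |nu W x|, ?_⟩ ⟨P, hP, rfl⟩
    rintro _ ⟨Q, hQ, rfl⟩
    exact (abs_le.1 (hb Q hQ)).1

/-- An input distribution that does not achieve capacity has average divergence below capacity
from some strictly positive output distribution. -/
lemma exists_relDiv_lt_capacity {W : X → Y → ℝ} (hW : IsChannel W)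
    {q₀ : Y → ℝ} (hq₀ : ∀ y, 0 < q₀ y) (hq₀1 : ∑ y, q₀ y = 1)
    {P : X → ℝ} (hP : IsDist P) (hPC : mutInfo P W < capacity W) :
    ∃ q : Y → ℝ, (∀ y, 0 < q y) ∧ ∑ y, q y = 1 ∧ ∑ x, P x * relDiv W q x < capacity W := by
  have hWn : ∀ x y, 0 ≤ W x y := fun x y => (hW x).1 y
  set d := capacity W - mutInfo P W with hd
  have hdpos : 0 < d := by linarith
  set r : ℝ := 1 - Real.exp (-(d / 2)) with hr
  have hr0 : 0 < r := by
    have : Real.exp (-(d / 2)) < 1 := by rw [Real.exp_lt_one_iff]; linarith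
    linarith
  have h1r : 1 - r = Real.exp (-(d / 2)) := by rw [hr]; ring
  have h1r0 : 0 < 1 - r := h1r ▸ Real.exp_pos _
  refine ⟨fun y => (1 - r) * outDist P W y + r * q₀ y, fun y => ?_, ?_, ?_⟩
  · have := outDist_nonneg hP hWn y
    have := hq₀ y
    positivity
  · simp [Finset.sum_add_distrib, ← Finset.mul_sum, sum_outDist hP hW, hq₀1]
  · have hterm : ∀ x y, P x * (W x y * Real.log (W x y / ((1 - r) * outDist P W y + r * q₀ y))) ≤
        P x * W x y * Real.log (W x y / outDist P W y) + P x * W x y * (d / 2) := by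
      intro x y
      rcases (hP.1 x).eq_or_lt with h0 | hp
      · simp [← h0]
      rcases (hWn x y).eq_or_lt with h0 | hw
      · simp [← h0]
      have hpw : 0 < P x * W x y := mul_pos hp hw
      have ho : 0 < outDist P W y := hpw.trans_le (le_outDist hP hWn x y)
      rw [← mul_assoc, ← mul_add]
      refine mul_le_mul_of_nonneg_left ?_ hpw.le
      have hle : W x y / ((1 - r) * outDist P W y + r * q₀ y) ≤
          W x y / ((1 - r) * outDist P W y) := by
        have := hq₀ y
        refine div_le_div_of_nonneg_left hw.le (by positivity) ?_
        have : 0 < r * q₀ y := by positivity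
        linarith
      have hq := hq₀ y
      refine (Real.log_le_log (by positivity) hle).trans ?_
      rw [Real.log_div hw.ne' (by positivity), Real.log_mul h1r0.ne' ho.ne', h1r, Real.log_exp,
        Real.log_div hw.ne' ho.ne']
      linarith
    have hs : ∑ x, ∑ y, P x * W x y * (d / 2) = d / 2 := by
      simp_rw [← Finset.sum_mul, ← Finset.mul_sum, (hW _).2, mul_one, hP.2, one_mul]
    calc _ ≤ ∑ x, ∑ y, (P x * W x y * Real.log (W x y / outDist P W y) +
            P x * W x y * (d / 2)) := by
          refine Finset.sum_le_sum fun x _ => ?_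
          rw [relDiv, Finset.mul_sum]
          exact Finset.sum_le_sum fun y _ => hterm x y
      _ = mutInfo P W + d / 2 := by
          simp only [Finset.sum_add_distrib, hs, mutInfo]
      _ < capacity W := by linarith

/-- Input distributions whose dispersion is bounded away from that of the capacity achievers are
uniformly suboptimal with respect to finitely many output distributions. -/
lemma exists_finset_relDiv_le {W : X → Y → ℝ} (hW : IsChannel W) (hsimple : Vmin W = Vmax W)
    {q₀ : Y → ℝ} (hq₀ : ∀ y, 0 < q₀ y) (hq₀1 : ∑ y, q₀ y = 1) {δ : ℝ} (hδ : 0 < δ) :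
    ∃ (Q : Finset (Y → ℝ)) (c : ℝ), 0 < c ∧ (∀ q ∈ Q, (∀ y, 0 < q y) ∧ ∑ y, q y = 1) ∧
      ∀ P : X → ℝ, IsDist P → δ ≤ |∑ x, P x * nu W x - Vmin W| →
        ∃ q ∈ Q, ∑ x, P x * relDiv W q x ≤ capacity W - c := by
  have hcont : ∀ f : X → ℝ, Continuous fun P : X → ℝ => ∑ x, P x * f x := fun f => by fun_prop
  have hK : IsCompact {P : X → ℝ | IsDist P ∧ δ ≤ |∑ x, P x * nu W x - Vmin W|} := by
    refine (isCompact_stdSimplex ℝ X).inter_right (t := {P | δ ≤ |∑ x, P x * nu W x - Vmin W|}) ?_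
    exact isClosed_le continuous_const ((hcont _).sub continuous_const).abs
  have key := hK.induction_on (p := fun s => ∃ (Q : Finset (Y → ℝ)) (c : ℝ), 0 < c ∧
      (∀ q ∈ Q, (∀ y, 0 < q y) ∧ ∑ y, q y = 1) ∧
      ∀ P ∈ s, ∃ q ∈ Q, ∑ x, P x * relDiv W q x ≤ capacity W - c) ?_ ?_ ?_ ?_
  · obtain ⟨Q, c, hc, hQ, h⟩ := key
    exact ⟨Q, c, hc, hQ, fun P hP hPδ => h P ⟨hP, hPδ⟩⟩
  · exact ⟨∅, 1, one_pos, by simp, by simp⟩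
  · rintro s t hst ⟨Q, c, hc, hQ, h⟩
    exact ⟨Q, c, hc, hQ, fun P hP => h P (hst hP)⟩
  · rintro s t ⟨Q, c, hc, hQ, h⟩ ⟨Q', c', hc', hQ', h'⟩
    refine ⟨Q ∪ Q', min c c', lt_min hc hc', fun q hq => ?_, ?_⟩
    · rcases Finset.mem_union.1 hq with hq | hq
      exacts [hQ q hq, hQ' q hq]
    · rintro P (hP | hP)
      · obtain ⟨q, hq, hle⟩ := h P hP
        exact ⟨q, Finset.mem_union_left _ hq, hle.trans (by linarith [min_le_left c c'])⟩
      · obtain ⟨q, hq, hle⟩ := h' P hP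
        exact ⟨q, Finset.mem_union_right _ hq, hle.trans (by linarith [min_le_right c c'])⟩
  · rintro P ⟨hP, hPδ⟩
    have hlt : mutInfo P W < capacity W := by
      refine lt_of_le_of_ne (mutInfo_le_capacity hW hP) fun heq => ?_
      rw [dispersion_eq_Vmin hsimple ⟨hP, heq⟩] at hPδ
      simp at hPδ
      linarith
    obtain ⟨q, hq, hq1, hlt⟩ := exists_relDiv_lt_capacity hW hq₀ hq₀1 hP hlt
    set c := (capacity W - ∑ x, P x * relDiv W q x) / 2 with hc
    refine ⟨{P' | ∑ x, P' x * relDiv W q x < capacity W - c}, mem_nhdsWithin_of_mem_nhds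
      ((isOpen_lt (hcont _) continuous_const).mem_nhds ?_), {q}, c, by linarith, ?_, ?_⟩
    · change ∑ x, P x * relDiv W q x < capacity W - c
      linarith
    · simpa using ⟨hq, hq1⟩
    · intro P' hP'
      exact ⟨q, by simp, le_of_lt hP'⟩

lemma nu_eq_sum_sq {W : X → Y → ℝ} (hW : IsChannel W) (x : X) :
    nu W x = ∑ y, W x y * (iStar W x y - relDiv W (qStar W) x) ^ 2 := by
  have h : relDiv W (qStar W) x = ∑ y, W x y * iStar W x y := rfl
  rw [nu, ← h]
  have : ∀ y, W x y * (iStar W x y - relDiv W (qStar W) x) ^ 2 =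
      W x y * iStar W x y ^ 2 - 2 * relDiv W (qStar W) x * (W x y * iStar W x y) +
        relDiv W (qStar W) x ^ 2 * W x y := fun y => by ring
  simp_rw [this, Finset.sum_add_distrib, Finset.sum_sub_distrib, ← Finset.mul_sum, (hW x).2, ← h]
  ring


open scoped Topology

/-! ### The Gaussian distribution function and the heat equation -/

lemma gpdf_eq (u : ℝ) : gpdf u = ProbabilityTheory.gaussianPDFReal 0 1 u := by
  simp [gpdf, ProbabilityTheory.gaussianPDFReal, neg_div]

lemma gpdf_pos (u : ℝ) : 0 < gpdf u := by
  unfold gpdf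
  positivity

lemma integrable_gpdf : Integrable gpdf := by
  rw [show gpdf = ProbabilityTheory.gaussianPDFReal 0 1 from funext gpdf_eq]
  exact ProbabilityTheory.integrable_gaussianPDFReal 0 1

lemma integral_gpdf : ∫ u, gpdf u = 1 := by
  rw [show gpdf = ProbabilityTheory.gaussianPDFReal 0 1 from funext gpdf_eq]
  exact ProbabilityTheory.integral_gaussianPDFReal_eq_one 0 one_ne_zero

lemma continuous_gpdf : Continuous gpdf := by
  unfold gpdf
  fun_prop

lemma hasDerivAt_gpdf (x : ℝ) : HasDerivAt gpdf (-x * gpdf x) x := by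
  have h : HasDerivAt (fun u : ℝ => -u ^ 2 / 2) (-x) x := by
    exact ((hasDerivAt_id x).pow 2).neg.div_const 2 |>.congr_deriv (by simp; ring)
  exact (h.exp.const_mul (Real.sqrt (2 * Real.pi))⁻¹).congr_deriv (by unfold gpdf; ring)

lemma gcdf_sub (a b : ℝ) : gcdf b - gcdf a = ∫ u in a..b, gpdf u :=
  intervalIntegral.integral_Iic_sub_Iic integrable_gpdf.integrableOn integrable_gpdf.integrableOn

lemma hasDerivAt_gcdf (x : ℝ) : HasDerivAt gcdf (gpdf x) x := by
  have h := (intervalIntegral.integral_hasDerivAt_right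
    (integrable_gpdf.intervalIntegrable (a := 0) (b := x))
    (continuous_gpdf.stronglyMeasurableAtFilter _ _) continuous_gpdf.continuousAt).const_add (gcdf 0)
  refine h.congr_of_eventuallyEq (Eventually.of_forall fun u => ?_)
  change gcdf u = gcdf 0 + ∫ u in (0 : ℝ)..u, gpdf u
  rw [← gcdf_sub]
  ring

lemma continuous_gcdf : Continuous gcdf :=
  continuous_iff_continuousAt.2 fun x => (hasDerivAt_gcdf x).continuousAt

lemma strictMono_gcdf : StrictMono gcdf :=
  strictMono_of_deriv_pos fun x => by rw [(hasDerivAt_gcdf x).deriv]; exact gpdf_pos x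

lemma gcdf_nonneg (x : ℝ) : 0 ≤ gcdf x :=
  setIntegral_nonneg measurableSet_Iic fun u _ => (gpdf_pos u).le

lemma gcdf_le_one (x : ℝ) : gcdf x ≤ 1 := by
  rw [← integral_gpdf]
  exact setIntegral_le_integral integrable_gpdf (Eventually.of_forall fun u => (gpdf_pos u).le)

lemma tendsto_gcdf_atTop : Tendsto gcdf atTop (𝓝 1) := by
  rw [← integral_gpdf]
  exact (aecover_Iic tendsto_id).integral_tendsto_of_countably_generated integrable_gpdf

lemma tendsto_gcdf_atBot : Tendsto gcdf atBot (𝓝 0) := by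
  have h : ∀ x, gcdf x = 1 - ∫ u in Set.Ioi x, gpdf u := by
    intro x
    rw [← integral_gpdf, eq_sub_iff_add_eq, ← Set.compl_Iic]
    exact integral_add_compl measurableSet_Iic integrable_gpdf
  have h2 : Tendsto (fun x : ℝ => ∫ u in Set.Ioi x, gpdf u) atBot (𝓝 1) := by
    rw [← integral_gpdf]
    exact (aecover_Ioi tendsto_id).integral_tendsto_of_countably_generated integrable_gpdf
  simpa [← h] using h2.const_sub 1

lemma gcdf_gcdfInv {ε : ℝ} (h0 : 0 < ε) (h1 : ε < 1) : gcdf (gcdfInv ε) = ε := by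
  refine Function.invFun_eq ?_
  obtain ⟨a, ha⟩ := (tendsto_gcdf_atBot.eventually (gt_mem_nhds h0)).exists
  obtain ⟨b, hb⟩ := (tendsto_gcdf_atTop.eventually (lt_mem_nhds h1)).exists
  obtain ⟨c, hc⟩ := mem_range_of_exists_le_of_exists_ge continuous_gcdf ⟨a, ha.le⟩ ⟨b, hb.le⟩
  exact ⟨c, hc⟩

/-- First-order Taylor estimate on a convex set. -/
lemma abs_sub_taylor_one_le {f f1 f2 : ℝ → ℝ} {K a b : ℝ} {s : Set ℝ} (hs : Convex ℝ s)
    (hf : ∀ x ∈ s, HasDerivAt f (f1 x) x) (hf1 : ∀ x ∈ s, HasDerivAt f1 (f2 x) x)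
    (hK : ∀ x ∈ s, |f2 x| ≤ K) (ha : a ∈ s) (hb : b ∈ s) :
    |f b - f a - (b - a) * f1 a| ≤ K * (b - a) ^ 2 := by
  have hsub : Set.uIcc a b ⊆ s := hs.ordConnected.uIcc_subset ha hb
  have hK0 : 0 ≤ K := (abs_nonneg _).trans (hK a ha)
  have h1 : ∀ x ∈ Set.uIcc a b, |f1 x - f1 a| ≤ K * |b - a| := by
    intro x hx
    have h2 := Convex.norm_image_sub_le_of_norm_hasDerivWithin_le
      (fun x hx => (hf1 x hx).hasDerivWithinAt) (fun x hx => hK x hx) hs ha (hsub hx)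
    refine h2.trans ?_
    exact mul_le_mul_of_nonneg_left (Set.abs_sub_left_of_mem_uIcc hx) hK0
  have h2 := Convex.norm_image_sub_le_of_norm_hasDerivWithin_le (s := Set.uIcc a b)
    (f := fun x => f x - x * f1 a) (f' := fun x => f1 x - 1 * f1 a) (C := K * |b - a|)
    (fun x hx => ((hf x (hsub hx)).sub ((hasDerivAt_id x).mul_const _)).hasDerivWithinAt)
    (fun x hx => by simpa using h1 x hx) (convex_uIcc a b) Set.left_mem_uIcc Set.right_mem_uIcc
  rw [Real.norm_eq_abs, Real.norm_eq_abs] at h2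
  calc _ = |f b - b * f1 a - (f a - a * f1 a)| := by congr 1; ring
    _ ≤ K * |b - a| * |b - a| := h2
    _ = _ := by rw [mul_assoc, ← sq, sq_abs]

/-- Second-order Taylor estimate on the line. -/
lemma abs_sub_taylor_two_le {f f1 f2 f3 : ℝ → ℝ} {K : ℝ}
    (hf : ∀ x, HasDerivAt f (f1 x) x) (hf1 : ∀ x, HasDerivAt f1 (f2 x) x)
    (hf2 : ∀ x, HasDerivAt f2 (f3 x) x) (hK : ∀ x, |f3 x| ≤ K) (a b : ℝ) :
    |f b - f a - (b - a) * f1 a - (b - a) ^ 2 / 2 * f2 a| ≤ K * |b - a| ^ 3 := by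
  have hK0 : 0 ≤ K := (abs_nonneg _).trans (hK a)
  have h1 : ∀ x ∈ Set.uIcc a b, |f1 x - f1 a - (x - a) * f2 a| ≤ K * |b - a| ^ 2 := by
    intro x hx
    refine (abs_sub_taylor_one_le convex_univ (fun x _ => hf1 x) (fun x _ => hf2 x)
      (fun x _ => hK x) (Set.mem_univ a) (Set.mem_univ x)).trans ?_
    rw [← sq_abs (x - a)]
    exact mul_le_mul_of_nonneg_left
      (pow_le_pow_left₀ (abs_nonneg _) (Set.abs_sub_left_of_mem_uIcc hx) 2) hK0
  have h2 := Convex.norm_image_sub_le_of_norm_hasDerivWithin_le (s := Set.uIcc a b)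
    (f := fun x => f x - x * f1 a - (x - a) ^ 2 / 2 * f2 a)
    (f' := fun x => f1 x - f1 a - (x - a) * f2 a) (C := K * |b - a| ^ 2)
    (fun x hx => by
      have h3 : HasDerivAt (fun x : ℝ => (x - a) ^ 2 / 2 * f2 a) ((x - a) * f2 a) x := by
        exact ((((hasDerivAt_id x).sub_const a).pow 2).div_const 2).mul_const (f2 a)
          |>.congr_deriv (by simp)
      have h4 := ((hf x).sub ((hasDerivAt_id x).mul_const (f1 a))).sub h3
      rw [one_mul] at h4
      exact h4.hasDerivWithinAt)
    (fun x hx => h1 x hx) (convex_uIcc a b) Set.left_mem_uIcc Set.right_mem_uIcc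
  rw [Real.norm_eq_abs, Real.norm_eq_abs] at h2
  calc _ = |f b - b * f1 a - (b - a) ^ 2 / 2 * f2 a -
        (f a - a * f1 a - (a - a) ^ 2 / 2 * f2 a)| := by congr 1; ring
    _ ≤ K * |b - a| ^ 2 * |b - a| := h2
    _ = _ := by ring

lemma hasDerivAt_neg_mul_gpdf (x : ℝ) :
    HasDerivAt (fun x => -x * gpdf x) ((x ^ 2 - 1) * gpdf x) x := by
  exact ((hasDerivAt_id x).neg.mul (hasDerivAt_gpdf x)).congr_deriv (by simp; ring)

lemma gpdf_le (x : ℝ) : gpdf x * (1 + x ^ 2 / 2 + x ^ 4 / 8) ≤ 1 := by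
  have h1 : (Real.sqrt (2 * Real.pi))⁻¹ ≤ 1 := by
    refine inv_le_one_of_one_le₀ (Real.one_le_sqrt.2 ?_)
    linarith [Real.pi_gt_three]
  have h2 := Real.quadratic_le_exp_of_nonneg (x := x ^ 2 / 2) (by positivity)
  have h3 : Real.exp (-x ^ 2 / 2) * Real.exp (x ^ 2 / 2) = 1 := by
    rw [← Real.exp_add, neg_div, neg_add_cancel, Real.exp_zero]
  have h4 : 1 + x ^ 2 / 2 + x ^ 4 / 8 ≤ Real.exp (x ^ 2 / 2) := by
    refine le_trans (le_of_eq ?_) h2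
    ring
  calc gpdf x * (1 + x ^ 2 / 2 + x ^ 4 / 8)
      ≤ 1 * Real.exp (-x ^ 2 / 2) * Real.exp (x ^ 2 / 2) := by
        unfold gpdf
        gcongr
    _ = 1 := by rw [mul_assoc, h3, one_mul]

lemma abs_sq_sub_one_mul_gpdf_le (x : ℝ) : |(x ^ 2 - 1) * gpdf x| ≤ 2 := by
  have h := gpdf_le x
  have h0 := gpdf_pos x
  rw [abs_mul, abs_of_pos h0]
  have : |x ^ 2 - 1| ≤ 2 * (1 + x ^ 2 / 2 + x ^ 4 / 8) := by
    rw [abs_le]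
    constructor <;> nlinarith [sq_nonneg x, sq_nonneg (x ^ 2)]
  calc _ ≤ 2 * (1 + x ^ 2 / 2 + x ^ 4 / 8) * gpdf x := by gcongr
    _ ≤ 2 := by linarith

lemma abs_cubic_mul_gpdf_le (x : ℝ) : |(3 * x - x ^ 3) / 4 * gpdf x| ≤ 2 := by
  have h := gpdf_le x
  have h0 := gpdf_pos x
  rw [abs_mul, abs_of_pos h0]
  have : |(3 * x - x ^ 3) / 4| ≤ 2 * (1 + x ^ 2 / 2 + x ^ 4 / 8) := by
    rw [abs_le]
    constructor <;> nlinarith [sq_nonneg x, sq_nonneg (x ^ 2), sq_nonneg (x - 1),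
      sq_nonneg (x + 1), sq_nonneg (x ^ 2 - x), sq_nonneg (x ^ 2 + x)]
  calc _ ≤ 2 * (1 + x ^ 2 / 2 + x ^ 4 / 8) * gpdf x := by gcongr
    _ ≤ 2 := by linarith

/-- The solution of the heat equation started from a step function. -/
def heat (s w : ℝ) : ℝ := gcdf (w / Real.sqrt s)

lemma hasDerivAt_div_sqrt (w : ℝ) {s : ℝ} (hs : 0 < s) :
    HasDerivAt (fun s => w / Real.sqrt s) (-(w / Real.sqrt s) / (2 * s)) s := by
  have h := (hasDerivAt_const s w).div (Real.hasDerivAt_sqrt hs.ne') (Real.sqrt_pos.2 hs).ne'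
  have h0 := Real.sqrt_pos.2 hs
  refine h.congr_deriv ?_
  have h1 := Real.sq_sqrt hs.le
  set r := Real.sqrt s
  rw [← h1]
  field_simp
  ring

lemma hasDerivAt_heat (w : ℝ) {s : ℝ} (hs : 0 < s) :
    HasDerivAt (fun s => heat s w)
      (1 / (2 * s) * (-(w / Real.sqrt s) * gpdf (w / Real.sqrt s))) s := by
  exact ((hasDerivAt_gcdf (w / Real.sqrt s)).comp s (hasDerivAt_div_sqrt w hs)).congr_deriv
    (by ring)

lemma hasDerivAt_deriv_heat (w : ℝ) {s : ℝ} (hs : 0 < s) :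
    HasDerivAt (fun s => 1 / (2 * s) * (-(w / Real.sqrt s) * gpdf (w / Real.sqrt s)))
      (1 / s ^ 2 * ((3 * (w / Real.sqrt s) - (w / Real.sqrt s) ^ 3) / 4 *
        gpdf (w / Real.sqrt s))) s := by
  have h1 : HasDerivAt (fun s : ℝ => 1 / (2 * s)) (-1 / (2 * s ^ 2)) s := by
    refine ((hasDerivAt_const s (1 : ℝ)).div ((hasDerivAt_id s).const_mul 2)
      (by simpa using hs.ne')).congr_deriv ?_
    simp
    field_simp
  have h2 := (hasDerivAt_neg_mul_gpdf (w / Real.sqrt s)).comp s (hasDerivAt_div_sqrt w hs)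
  refine (h1.mul h2).congr_deriv ?_
  simp only [Function.comp]
  generalize w / Real.sqrt s = z
  field_simp
  ring

/-- One step of a bounded martingale, run along the heat equation. -/
lemma heat_step {ι : Type*} [Fintype ι] {s₀ B : ℝ} (hs₀ : 0 < s₀) {p ξ : ι → ℝ}
    (hp : IsDist p) (hmean : ∑ y, p y * ξ y = 0) (hB : ∀ y, |ξ y| ≤ B)
    {s w τ : ℝ} (hτ0 : 0 ≤ τ) (hτ1 : τ ≤ 1) (hs : s₀ ≤ s - τ ^ 2 * ∑ y, p y * ξ y ^ 2) :
    heat s w - (2 * B ^ 3 / (Real.sqrt s₀) ^ 3 + 2 * B ^ 4 / s₀ ^ 2) * τ ^ 3 ≤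
      ∑ y, p y * heat (s - τ ^ 2 * ∑ y, p y * ξ y ^ 2) (w - τ * ξ y) := by
  set v := ∑ y, p y * ξ y ^ 2 with hv
  have hv0 : 0 ≤ v := Finset.sum_nonneg fun y _ => mul_nonneg (hp.1 y) (sq_nonneg _)
  have hvB : v ≤ B ^ 2 := by
    calc v ≤ ∑ y, p y * B ^ 2 := by
          refine Finset.sum_le_sum fun y _ => mul_le_mul_of_nonneg_left ?_ (hp.1 y)
          rw [← sq_abs]
          exact pow_le_pow_left₀ (abs_nonneg _) (hB y) 2
      _ = B ^ 2 := by rw [← Finset.sum_mul, hp.2, one_mul]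
  have hB0 : 0 ≤ B := by
    by_contra hneg
    have : IsEmpty ι := ⟨fun y => hneg ((abs_nonneg _).trans (hB y))⟩
    have := hp.2
    simp at this
  set s' := s - τ ^ 2 * v with hs'
  have hs'0 : 0 < s' := hs₀.trans_le hs
  set σ := Real.sqrt s' with hσ
  have hσ0 : 0 < σ := Real.sqrt_pos.2 hs'0
  have hσs : σ ^ 2 = s' := Real.sq_sqrt hs'0.le
  have hσ₀0 : 0 < Real.sqrt s₀ := Real.sqrt_pos.2 hs₀
  have hσ₀ : Real.sqrt s₀ ≤ σ := Real.sqrt_le_sqrt hs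
  set z := w / σ with hz
  have hspace : ∀ y, gcdf z - τ / σ * gpdf z * ξ y +
      τ ^ 2 / (2 * s') * (-z * gpdf z) * ξ y ^ 2 - 2 * B ^ 3 / (Real.sqrt s₀) ^ 3 * τ ^ 3 ≤
      heat s' (w - τ * ξ y) := by
    intro y
    have h := abs_sub_taylor_two_le hasDerivAt_gcdf hasDerivAt_gpdf hasDerivAt_neg_mul_gpdf
      abs_sq_sub_one_mul_gpdf_le z ((w - τ * ξ y) / σ)
    have hd : (w - τ * ξ y) / σ - z = -(τ * ξ y / σ) := by rw [hz]; ring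
    rw [hd] at h
    have hab : 2 * |-(τ * ξ y / σ)| ^ 3 ≤ 2 * B ^ 3 / (Real.sqrt s₀) ^ 3 * τ ^ 3 := by
      rw [abs_neg, abs_div, abs_mul, abs_of_nonneg hτ0, abs_of_pos hσ0]
      calc 2 * (τ * |ξ y| / σ) ^ 3 ≤ 2 * (τ * B / Real.sqrt s₀) ^ 3 := by
            have := hB y
            gcongr
        _ = _ := by ring
    have h1 := (abs_le.1 (h.trans hab)).1
    have h2 : (-(τ * ξ y / σ)) ^ 2 / 2 * (-z * gpdf z) =
        τ ^ 2 / (2 * s') * (-z * gpdf z) * ξ y ^ 2 := by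
      rw [← hσs]
      field_simp
    rw [h2] at h1
    unfold heat
    rw [← hσ]
    have h3 : -(τ * ξ y / σ) * gpdf z = - (τ / σ * gpdf z * ξ y) := by ring
    rw [h3] at h1
    linarith
  have htime : heat s w ≤ gcdf z + τ ^ 2 * v / (2 * s') * (-z * gpdf z) +
      2 * B ^ 4 / s₀ ^ 2 * τ ^ 3 := by
    have hss : s' ≤ s := by
      have : 0 ≤ τ ^ 2 * v := by positivity
      linarith
    have h := abs_sub_taylor_one_le (convex_Ici s₀)
      (fun x hx => hasDerivAt_heat w (hs₀.trans_le hx))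
      (fun x hx => hasDerivAt_deriv_heat w (hs₀.trans_le hx)) (K := 2 / s₀ ^ 2)
      (fun x hx => by
        have hx0 : 0 < x := hs₀.trans_le hx
        rw [abs_mul, abs_of_pos (by positivity : 0 < 1 / x ^ 2)]
        calc 1 / x ^ 2 * _ ≤ 1 / s₀ ^ 2 * 2 := by
              have h2 := abs_cubic_mul_gpdf_le (w / Real.sqrt x)
              have h3 : s₀ ≤ x := hx
              gcongr
          _ = _ := by ring) (a := s') (b := s) hs (hs.trans hss)
    have hd : s - s' = τ ^ 2 * v := by rw [hs']; ring
    have h1 := (abs_le.1 h).2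
    rw [hd] at h1
    have h2 : heat s' w = gcdf z := rfl
    rw [h2, ← hσ, ← hz] at h1
    have h3 : 2 / s₀ ^ 2 * (τ ^ 2 * v) ^ 2 ≤ 2 * B ^ 4 / s₀ ^ 2 * τ ^ 3 := by
      have : (τ ^ 2 * v) ^ 2 ≤ τ ^ 3 * B ^ 4 := by
        calc (τ ^ 2 * v) ^ 2 = τ ^ 3 * τ * v ^ 2 := by ring
          _ ≤ τ ^ 3 * 1 * (B ^ 2) ^ 2 := by gcongr
          _ = _ := by ring
      calc _ ≤ 2 / s₀ ^ 2 * (τ ^ 3 * B ^ 4) := by gcongr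
        _ = _ := by ring
    have h4 : τ ^ 2 * v * (1 / (2 * s') * (-z * gpdf z)) =
      τ ^ 2 * v / (2 * s') * (-z * gpdf z) := by ring
    rw [h4] at h1
    linarith
  have hsum : ∑ y, p y * (gcdf z - τ / σ * gpdf z * ξ y +
      τ ^ 2 / (2 * s') * (-z * gpdf z) * ξ y ^ 2 - 2 * B ^ 3 / (Real.sqrt s₀) ^ 3 * τ ^ 3) =
      gcdf z + τ ^ 2 * v / (2 * s') * (-z * gpdf z) -
        2 * B ^ 3 / (Real.sqrt s₀) ^ 3 * τ ^ 3 := by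
    have : ∀ y, p y * (gcdf z - τ / σ * gpdf z * ξ y +
        τ ^ 2 / (2 * s') * (-z * gpdf z) * ξ y ^ 2 - 2 * B ^ 3 / (Real.sqrt s₀) ^ 3 * τ ^ 3) =
        (gcdf z - 2 * B ^ 3 / (Real.sqrt s₀) ^ 3 * τ ^ 3) * p y -
          τ / σ * gpdf z * (p y * ξ y) +
          τ ^ 2 / (2 * s') * (-z * gpdf z) * (p y * ξ y ^ 2) := fun y => by ring
    simp_rw [this, Finset.sum_add_distrib, Finset.sum_sub_distrib, ← Finset.mul_sum, hp.2, hmean,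
      ← hv]
    ring
  have := Finset.sum_le_sum fun y (_ : y ∈ Finset.univ) =>
    mul_le_mul_of_nonneg_left (hspace y) (hp.1 y)
  rw [hsum] at this
  linarith


/-! ### Feedback paths -/

/-- The sum of `ψ(x_k, y_k)` along the output sequence, with inputs chosen by the encoder `e`. -/
def pathSum (ψ : X → Y → ℝ) : (List Y → X) → List Y → ℝ
  | _, [] => 0
  | e, y :: l => ψ (e []) y + pathSum ψ (fun l' => e (y :: l')) l

/-- The probability of an output sequence under the encoder `e`. -/
def pathProb (W : X → Y → ℝ) : (List Y → X) → List Y → ℝ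
  | _, [] => 1
  | e, y :: l => W (e []) y * pathProb W (fun l' => e (y :: l')) l

/-- The expectation of a function of the output sequence of length `n` under the encoder `e`. -/
def pathExp (W : X → Y → ℝ) : ℕ → (List Y → X) → (List Y → ℝ) → ℝ
  | 0, _, G => G []
  | n + 1, e, G => ∑ y, W (e []) y * pathExp W n (fun l => e (y :: l)) (fun l => G (y :: l))

omit [Fintype X] [Fintype Y] in
lemma prod_take_eq_pathProb (W : X → Y → ℝ) (n : ℕ) (e : List Y → X) (y : Fin n → Y) :
    ∏ k : Fin n, W (e ((List.ofFn y).take (k : ℕ))) (y k) = pathProb W e (List.ofFn y) := by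
  induction n generalizing e with
  | zero => simp [pathProb]
  | succ n ih =>
    rw [Fin.prod_univ_succ, List.ofFn_succ, pathProb, ← ih]
    simp

omit [Fintype X] in
lemma sum_pathProb_mul (W : X → Y → ℝ) (n : ℕ) (e : List Y → X) (G : List Y → ℝ) :
    ∑ y : Fin n → Y, pathProb W e (List.ofFn y) * G (List.ofFn y) = pathExp W n e G := by
  induction n generalizing e G with
  | zero => simp [pathProb, pathExp]
  | succ n ih =>
    rw [pathExp, ← (Fin.consEquiv fun _ => Y).sum_comp, Fintype.sum_prod_type]
    refine Finset.sum_congr rfl fun y _ => ?_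
    rw [← ih, Finset.mul_sum]
    refine Finset.sum_congr rfl fun z _ => ?_
    simp [Fin.consEquiv, List.ofFn_succ, pathProb, mul_assoc]

section
omit [Fintype X] [Fintype Y]

lemma pathSum_sub (ψ φ : X → Y → ℝ) (e : List Y → X) (l : List Y) :
    pathSum (fun x y => ψ x y - φ x y) e l = pathSum ψ e l - pathSum φ e l := by
  induction l generalizing e with
  | nil => simp [pathSum]
  | cons y l ih => rw [pathSum, ih, pathSum, pathSum]; ring

lemma pathSum_mono {ψ φ : X → Y → ℝ} (h : ∀ x y, ψ x y ≤ φ x y) (e : List Y → X) (l : List Y) :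
    pathSum ψ e l ≤ pathSum φ e l := by
  induction l generalizing e with
  | nil => simp [pathSum]
  | cons y l ih => exact add_le_add (h _ _) (ih _)

lemma pathSum_const (c : ℝ) (e : List Y → X) (l : List Y) :
    pathSum (fun _ _ => c) e l = l.length * c := by
  induction l generalizing e with
  | nil => simp [pathSum]
  | cons y l ih => rw [pathSum, ih]; push_cast [List.length_cons]; ring

lemma pathSum_nonneg {ψ : X → Y → ℝ} (h : ∀ x y, 0 ≤ ψ x y) (e : List Y → X) (l : List Y) :
    0 ≤ pathSum ψ e l := by
  induction l generalizing e with
  | nil => simp [pathSum]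
  | cons y l ih => exact add_nonneg (h _ _) (ih _)

lemma pathProb_nonneg {W : X → Y → ℝ} (hW : ∀ x y, 0 ≤ W x y) (e : List Y → X) (l : List Y) :
    0 ≤ pathProb W e l := by
  induction l generalizing e with
  | nil => simp [pathProb]
  | cons y l ih => exact mul_nonneg (hW _ _) (ih _)

/-- The path probability is the exponential of the accumulated information density. -/
lemma pathProb_eq_exp {W : X → Y → ℝ} (hW : ∀ x y, 0 ≤ W x y) {q : Y → ℝ} (hq : ∀ y, 0 < q y)
    (e : List Y → X) (l : List Y) (h : pathProb W e l ≠ 0) :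
    pathProb W e l =
      Real.exp (pathSum (fun x y => Real.log (W x y / q y)) e l) * (l.map q).prod := by
  induction l generalizing e with
  | nil => simp [pathProb, pathSum]
  | cons y l ih =>
    rw [pathProb] at h ⊢
    have hw : 0 < W (e []) y := (hW _ _).lt_of_ne (left_ne_zero_of_mul h).symm
    rw [ih _ (right_ne_zero_of_mul h), pathSum, Real.exp_add, Real.exp_log (div_pos hw (hq y)),
      List.map_cons, List.prod_cons]
    have := (hq y).ne'
    field_simp

end

/-- The empirical distribution of the channel inputs along a path. -/
def inputType (e : List Y → X) (l : List Y) (x : X) : ℝ :=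
  pathSum (fun x' _ => if x' = x then 1 else 0) e l / l.length

omit [Fintype Y] in
lemma pathSum_eq_sum_count (g : X → ℝ) (e : List Y → X) (l : List Y) :
    pathSum (fun x _ => g x) e l =
      ∑ x, pathSum (fun x' _ => if x' = x then 1 else 0) e l * g x := by
  induction l generalizing e with
  | nil => simp [pathSum]
  | cons y l ih => simp [pathSum, ih, add_mul, Finset.sum_add_distrib]

omit [Fintype Y] in
lemma pathSum_eq_length_mul (g : X → ℝ) (e : List Y → X) {l : List Y} (hl : l ≠ []) :
    pathSum (fun x _ => g x) e l = l.length * ∑ x, inputType e l x * g x := by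
  have : (l.length : ℝ) ≠ 0 := by simpa using hl
  rw [pathSum_eq_sum_count, Finset.mul_sum]
  refine Finset.sum_congr rfl fun x _ => ?_
  rw [inputType]
  field_simp

omit [Fintype Y] in
lemma isDist_inputType (e : List Y → X) {l : List Y} (hl : l ≠ []) : IsDist (inputType e l) := by
  have h0 : (l.length : ℝ) ≠ 0 := by simpa using hl
  refine ⟨fun x => div_nonneg (pathSum_nonneg (fun x y => by split_ifs <;> norm_num) e l)
    (Nat.cast_nonneg _), ?_⟩
  have h := pathSum_eq_length_mul (fun _ => 1) e hl
  rw [pathSum_const] at h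
  simpa using (mul_left_cancel₀ h0 h).symm

section
omit [Fintype X]

lemma pathExp_mono {W : X → Y → ℝ} (hW : ∀ x y, 0 ≤ W x y) {n : ℕ} {e : List Y → X}
    {G H : List Y → ℝ} (h : ∀ l, l.length = n → pathProb W e l ≠ 0 → G l ≤ H l) :
    pathExp W n e G ≤ pathExp W n e H := by
  rw [← sum_pathProb_mul, ← sum_pathProb_mul]
  refine Finset.sum_le_sum fun y _ => ?_
  by_cases h0 : pathProb W e (List.ofFn y) = 0
  · simp [h0]
  · exact mul_le_mul_of_nonneg_left (h _ (by simp) h0) (pathProb_nonneg hW _ _)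

lemma pathExp_const {W : X → Y → ℝ} (hW : IsChannel W) (n : ℕ) (e : List Y → X) (c : ℝ) :
    pathExp W n e (fun _ => c) = c := by
  induction n generalizing e with
  | zero => rfl
  | succ n ih => rw [pathExp]; simp_rw [ih]; rw [← Finset.sum_mul, (hW _).2, one_mul]

lemma pathExp_sub (W : X → Y → ℝ) (n : ℕ) (e : List Y → X) (G H : List Y → ℝ) :
    pathExp W n e (fun l => G l - H l) = pathExp W n e G - pathExp W n e H := by
  simp_rw [← sum_pathProb_mul, mul_sub, Finset.sum_sub_distrib]

lemma pathExp_sum_mul {ι : Type*} (W : X → Y → ℝ) (n : ℕ) (e : List Y → X) (S : Finset ι)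
    (c : ℝ) (G : ι → List Y → ℝ) :
    pathExp W n e (fun l => ∑ i ∈ S, c * G i l) = ∑ i ∈ S, c * pathExp W n e (G i) := by
  simp_rw [← sum_pathProb_mul, Finset.mul_sum]
  rw [Finset.sum_comm]
  refine Finset.sum_congr rfl fun i _ => Finset.sum_congr rfl fun y _ => ?_
  ring

/-- The second moment of a martingale with bounded conditional variances. -/
lemma pathExp_sq_le {W : X → Y → ℝ} (hW : IsChannel W) {ψ : X → Y → ℝ} {B : ℝ}
    (hmean : ∀ x, ∑ y, W x y * ψ x y = 0) (hB : ∀ x, ∑ y, W x y * ψ x y ^ 2 ≤ B)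
    (n : ℕ) (e : List Y → X) (a : ℝ) :
    pathExp W n e (fun l => (a + pathSum ψ e l) ^ 2) ≤ a ^ 2 + n * B := by
  induction n generalizing e a with
  | zero => simp [pathExp, pathSum]
  | succ n ih =>
    rw [pathExp]
    have h1 : ∀ y, W (e []) y * pathExp W n (fun l => e (y :: l))
        (fun l => (a + pathSum ψ e (y :: l)) ^ 2) ≤
        W (e []) y * ((a + ψ (e []) y) ^ 2 + n * B) := by
      intro y
      refine mul_le_mul_of_nonneg_left ?_ ((hW _).1 y)
      have := ih (fun l => e (y :: l)) (a + ψ (e []) y)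
      simpa only [pathSum, add_assoc] using this
    refine (Finset.sum_le_sum fun y _ => h1 y).trans ?_
    have h2 : ∀ y, W (e []) y * ((a + ψ (e []) y) ^ 2 + n * B) =
        (a ^ 2 + n * B) * W (e []) y + 2 * a * (W (e []) y * ψ (e []) y) +
          W (e []) y * ψ (e []) y ^ 2 := fun y => by ring
    simp_rw [h2, Finset.sum_add_distrib, ← Finset.mul_sum, (hW _).2, hmean]
    have := hB (e [])
    push_cast
    linarith

/-- The terminal value of `heat` along a path, where steps that would exhaust the remaining
variance are skipped. -/
def heatPath (v : X → ℝ) (ξ : X → Y → ℝ) (τ s₀ : ℝ) : (List Y → X) → ℝ → ℝ → List Y → ℝ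
  | _, s, w, [] => heat s w
  | e, s, w, y :: l =>
    if s₀ ≤ s - τ ^ 2 * v (e []) then
      heatPath v ξ τ s₀ (fun l' => e (y :: l')) (s - τ ^ 2 * v (e [])) (w - τ * ξ (e []) y) l
    else heatPath v ξ τ s₀ (fun l' => e (y :: l')) s w l

omit [Fintype Y] in
lemma heatPath_le_one (v : X → ℝ) (ξ : X → Y → ℝ) (τ s₀ : ℝ) (e : List Y → X) (s w : ℝ)
    (l : List Y) : heatPath v ξ τ s₀ e s w l ≤ 1 := by
  induction l generalizing e s w with
  | nil => exact gcdf_le_one _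
  | cons y l ih => rw [heatPath]; split_ifs <;> exact ih _ _ _

omit [Fintype Y] in
lemma heatPath_eq {v : X → ℝ} (hv : ∀ x, 0 ≤ v x) (ξ : X → Y → ℝ) {τ s₀ : ℝ} (e : List Y → X)
    {s : ℝ} (w : ℝ) {l : List Y} (h : s₀ ≤ s - τ ^ 2 * pathSum (fun x _ => v x) e l) :
    heatPath v ξ τ s₀ e s w l =
      heat (s - τ ^ 2 * pathSum (fun x _ => v x) e l) (w - τ * pathSum ξ e l) := by
  induction l generalizing e s w with
  | nil => simp [heatPath, pathSum]
  | cons y l ih =>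
    simp only [pathSum] at h ⊢
    have h0 : 0 ≤ τ ^ 2 * pathSum (fun x _ => v x) (fun l' => e (y :: l')) l :=
      mul_nonneg (sq_nonneg _) (pathSum_nonneg (fun x _ => hv x) _ _)
    rw [heatPath, if_pos (by linarith), ih _ _ (by linarith)]
    congr 1 <;> ring

lemma heat_le_pathExp_heatPath {W : X → Y → ℝ} (hW : IsChannel W) {ξ : X → Y → ℝ} {B s₀ τ : ℝ}
    (hs₀ : 0 < s₀) (hmean : ∀ x, ∑ y, W x y * ξ x y = 0) (hB : ∀ x y, |ξ x y| ≤ B)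
    (hτ0 : 0 ≤ τ) (hτ1 : τ ≤ 1) (n : ℕ) (e : List Y → X) (s w : ℝ) :
    heat s w - n * ((2 * B ^ 3 / (Real.sqrt s₀) ^ 3 + 2 * B ^ 4 / s₀ ^ 2) * τ ^ 3) ≤
      pathExp W n e (heatPath (fun x => ∑ y, W x y * ξ x y ^ 2) ξ τ s₀ e s w) := by
  induction n generalizing e s w with
  | zero => simp [pathExp, heatPath]
  | succ n ih =>
    set c := (2 * B ^ 3 / (Real.sqrt s₀) ^ 3 + 2 * B ^ 4 / s₀ ^ 2) * τ ^ 3 with hc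
    have hnn : ∀ y, 0 ≤ W (e []) y := (hW _).1
    have hc0 : 0 ≤ c := by
      obtain ⟨y⟩ : Nonempty Y := by
        by_contra hne
        have := not_nonempty_iff.1 hne
        have h := (hW (e [])).2
        simp at h
      have : 0 ≤ B := (abs_nonneg _).trans (hB (e []) y)
      positivity
    rw [pathExp]
    push_cast
    by_cases h : s₀ ≤ s - τ ^ 2 * ∑ y, W (e []) y * ξ (e []) y ^ 2
    · have hstep := heat_step hs₀ (hW (e [])) (hmean _) (hB _) hτ0 hτ1 (s := s) (w := w) h
      simp only [heatPath, if_pos h]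
      refine le_trans ?_ (Finset.sum_le_sum fun y _ => mul_le_mul_of_nonneg_left (ih _ _ _) (hnn y))
      simp_rw [mul_sub, Finset.sum_sub_distrib]
      rw [← Finset.sum_mul, (hW _).2]
      linarith
    · simp only [heatPath, if_neg h]
      refine le_trans ?_ (Finset.sum_le_sum fun y _ => mul_le_mul_of_nonneg_left (ih _ _ _) (hnn y))
      rw [← Finset.sum_mul, (hW _).2]
      linarith

end


/-! ### The converse -/

/-- The centred information density with respect to the output distribution `q`. -/
def centredDensity (W : X → Y → ℝ) (q : Y → ℝ) (x : X) (y : Y) : ℝ :=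
  Real.log (W x y / q y) - relDiv W q x

omit [Fintype X] in
lemma sum_mul_centredDensity {W : X → Y → ℝ} (hW : IsChannel W) (q : Y → ℝ) (x : X) :
    ∑ y, W x y * centredDensity W q x y = 0 := by
  simp_rw [centredDensity, mul_sub, Finset.sum_sub_distrib, ← Finset.sum_mul, (hW x).2, one_mul]
  exact sub_self _

lemma sum_mul_centredDensity_sq_le {W : X → Y → ℝ} (hW : IsChannel W) (q : Y → ℝ) (x : X) :
    ∑ y, W x y * centredDensity W q x y ^ 2 ≤
      ∑ x, ∑ y, W x y * centredDensity W q x y ^ 2 :=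
  Finset.single_le_sum (f := fun x => ∑ y, W x y * centredDensity W q x y ^ 2)
    (fun x _ => Finset.sum_nonneg fun y _ => mul_nonneg ((hW x).1 y) (sq_nonneg _))
    (Finset.mem_univ x)

omit [Fintype X] [Fintype Y] in
/-- If a path is more likely than a mixture of product measures, then all its accumulated
information densities are large. -/
lemma lt_pathSum_of_mixture_lt {W : X → Y → ℝ} (hW : ∀ x y, 0 ≤ W x y) {Q : Finset (Y → ℝ)}
    (hQ : ∀ q ∈ Q, ∀ y, 0 < q y) {e : List Y → X} {l : List Y} (h0 : pathProb W e l ≠ 0) {a : ℝ}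
    (h : Real.exp a * (∑ q ∈ Q, (l.map q).prod) / Q.card < pathProb W e l)
    {q : Y → ℝ} (hq : q ∈ Q) :
    a - Real.log Q.card < pathSum (fun x y => Real.log (W x y / q y)) e l := by
  have hprod : ∀ q ∈ Q, 0 < (l.map q).prod := fun q hq =>
    List.prod_pos fun r hr => by
      obtain ⟨y, _, rfl⟩ := List.mem_map.1 hr
      exact hQ q hq y
  have hcard : (0 : ℝ) < Q.card := by exact_mod_cast Finset.card_pos.2 ⟨q, hq⟩
  have h1 : (l.map q).prod ≤ ∑ q ∈ Q, (l.map q).prod :=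
    Finset.single_le_sum (f := fun q : Y → ℝ => (l.map q).prod) (fun q hq => (hprod q hq).le) hq
  rw [pathProb_eq_exp hW (hQ q hq) e l h0] at h
  have h2 : Real.exp a * (l.map q).prod / Q.card ≤
      Real.exp a * (∑ q ∈ Q, (l.map q).prod) / Q.card := by gcongr
  have h3 : Real.exp (a - Real.log Q.card) * (l.map q).prod <
      Real.exp (pathSum (fun x y => Real.log (W x y / q y)) e l) * (l.map q).prod := by
    refine lt_of_le_of_lt (le_of_eq ?_) (h2.trans_lt h)
    rw [Real.exp_sub, Real.exp_log hcard]
    ring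
  exact Real.exp_lt_exp.1 (lt_of_mul_lt_mul_right h3 (hprod q hq).le)

lemma exists_gap {V t ε : ℝ} (hV : 0 < V) (hε : ε < gcdf (t / Real.sqrt V)) :
    ∃ η δ : ℝ, 0 < η ∧ 0 < δ ∧
      ε < heat (V + 2 * δ) (t - 2 * η) - gcdf (-η / Real.sqrt (3 * δ)) := by
  have hsV : Real.sqrt V ≠ 0 := (Real.sqrt_pos.2 hV).ne'
  have hη : ∀ᶠ η in 𝓝[>] (0 : ℝ), ε < gcdf ((t - 2 * η) / Real.sqrt V) := by
    have hc : ContinuousAt (fun η : ℝ => gcdf ((t - 2 * η) / Real.sqrt V)) 0 :=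
      continuous_gcdf.continuousAt.comp (by fun_prop)
    refine (hc.eventually (lt_mem_nhds ?_)).filter_mono nhdsWithin_le_nhds
    simpa using hε
  obtain ⟨η, hη, hη0⟩ := (hη.and self_mem_nhdsWithin).exists
  have hη0 : 0 < η := hη0
  have h1 : Tendsto (fun δ : ℝ => heat (V + 2 * δ) (t - 2 * η)) (𝓝[>] 0)
      (𝓝 (gcdf ((t - 2 * η) / Real.sqrt V))) := by
    have hc : ContinuousAt (fun δ : ℝ => heat (V + 2 * δ) (t - 2 * η)) 0 := by
      refine continuous_gcdf.continuousAt.comp (ContinuousAt.div (by fun_prop) (by fun_prop) ?_)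
      simpa using hsV
    have := hc.tendsto.mono_left (nhdsWithin_le_nhds (s := Set.Ioi 0))
    simpa [heat] using this
  have h2 : Tendsto (fun δ : ℝ => gcdf (-η / Real.sqrt (3 * δ))) (𝓝[>] 0) (𝓝 0) := by
    have h3 : Tendsto (fun δ : ℝ => Real.sqrt (3 * δ)) (𝓝[>] 0) (𝓝[>] 0) := by
      refine tendsto_nhdsWithin_iff.2 ⟨?_, ?_⟩
      · have hc : Continuous fun δ : ℝ => Real.sqrt (3 * δ) := by fun_prop
        simpa using (hc.tendsto 0).mono_left (nhdsWithin_le_nhds (s := Set.Ioi 0))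
      · filter_upwards [self_mem_nhdsWithin] with δ hδ
        have : 0 < δ := hδ
        exact Real.sqrt_pos.2 (by positivity)
    have h4 : Tendsto (fun δ : ℝ => -η / Real.sqrt (3 * δ)) (𝓝[>] 0) atBot := by
      simp_rw [div_eq_mul_inv]
      exact (tendsto_inv_nhdsGT_zero.comp h3).const_mul_atTop_of_neg (by linarith)
    exact tendsto_gcdf_atBot.comp h4
  have h5 := h1.sub h2
  rw [sub_zero] at h5
  obtain ⟨δ, hδ, hδ0⟩ := ((h5.eventually (lt_mem_nhds hη)).and self_mem_nhdsWithin).exists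
  exact ⟨η, δ, hη0, hδ0, hδ⟩

/-- Whatever the encoder does, with the Gaussian probability the output sequence is not much more
likely under it than under a fixed mixture of product measures. -/
lemma eventually_le_pathExp_mixture {W : X → Y → ℝ} (hW : IsChannel W) (hcol : NoZeroColumn W)
    (hVmin : 0 < Vmin W) (hsimple : Vmin W = Vmax W) {t ε : ℝ}
    (hε : ε < gcdf (t / Real.sqrt (Vmin W))) :
    ∃ (Q : Finset (Y → ℝ)) (ε' : ℝ), Q.Nonempty ∧ ε < ε' ∧
      (∀ q ∈ Q, (∀ y, 0 < q y) ∧ ∑ y, q y = 1) ∧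
      ∀ᶠ n : ℕ in atTop, ∀ e : List Y → X, ε' ≤ pathExp W n e (fun l =>
        if pathProb W e l ≤ Real.exp (n * capacity W + t * Real.sqrt n) *
          (∑ q ∈ Q, (l.map q).prod) / Q.card then 1 else 0) := by
  have hWn : ∀ x y, 0 ≤ W x y := fun x y => (hW x).1 y
  obtain ⟨P, hP, hPC, hqP⟩ := exists_achiever_qStar hVmin
  have hqpos : ∀ y, 0 < qStar W y := hqP ▸ outDist_pos_of_achiever hW hcol hP hPC
  have hq1 : ∑ y, qStar W y = 1 := hqP ▸ sum_outDist hP hW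
  have hDle : ∀ x, relDiv W (qStar W) x ≤ capacity W :=
    hqP ▸ relDiv_le_capacity hW hcol hP hPC
  obtain ⟨η, δ, hη, hδ, hgap⟩ := exists_gap hVmin hε
  obtain ⟨Q₀, c, hc, hQ₀, hfar⟩ := exists_finset_relDiv_le hW hsimple hqpos hq1 hδ
  set C := capacity W
  set V := Vmin W
  set ε₁ := gcdf (-η / Real.sqrt (3 * δ)) with hε₁
  set h₀ := heat (V + 2 * δ) (t - 2 * η) with hh₀
  set Q : Finset (Y → ℝ) := insert (qStar W) Q₀ with hQdef
  have hQ : ∀ q ∈ Q, (∀ y, 0 < q y) ∧ ∑ y, q y = 1 := by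
    intro q hq
    rcases Finset.mem_insert.1 hq with rfl | hq
    exacts [⟨hqpos, hq1⟩, hQ₀ q hq]
  set ξ := centredDensity W (qStar W) with hξ
  set B := ∑ x, ∑ y, |ξ x y| with hB
  have hξB : ∀ x y, |ξ x y| ≤ B := fun x y =>
    (Finset.single_le_sum (f := fun y => |ξ x y|) (fun y _ => abs_nonneg _)
      (Finset.mem_univ y)).trans (Finset.single_le_sum (f := fun x => ∑ y, |ξ x y|)
        (fun x _ => Finset.sum_nonneg fun y _ => abs_nonneg _) (Finset.mem_univ x))
  have hnu : nu W = fun x => ∑ y, W x y * ξ x y ^ 2 := funext fun x => nu_eq_sum_sq hW x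
  have hnu0 : ∀ x, 0 ≤ nu W x := fun x => by
    rw [hnu]; exact Finset.sum_nonneg fun y _ => mul_nonneg (hWn x y) (sq_nonneg _)
  set K := 2 * B ^ 3 / (Real.sqrt δ) ^ 3 + 2 * B ^ 4 / δ ^ 2 with hK
  set S := ∑ q ∈ Q₀, ∑ x, ∑ y, W x y * centredDensity W q x y ^ 2 with hS
  have hS0 : 0 ≤ S := Finset.sum_nonneg fun q _ => Finset.sum_nonneg fun x _ =>
    Finset.sum_nonneg fun y _ => mul_nonneg (hWn x y) (sq_nonneg _)
  set gap := (h₀ - ε₁ - ε) / 2 with hgapdef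
  have hgap0 : 0 < gap := by rw [hgapdef]; linarith
  refine ⟨Q, ε + gap, ⟨qStar W, Finset.mem_insert_self _ _⟩, by linarith, hQ, ?_⟩
  have hsqrt : Tendsto (fun n : ℕ => Real.sqrt n) atTop atTop :=
    Real.tendsto_sqrt_atTop.comp tendsto_natCast_atTop_atTop
  filter_upwards [hsqrt.eventually_ge_atTop 1, hsqrt.eventually_ge_atTop (Real.log Q.card / η),
    hsqrt.eventually_ge_atTop ((η - t) / (c / 2)),
    hsqrt.eventually_ge_atTop ((K + S * (4 / c ^ 2)) / gap)] with n hn1 hn2 hn3 hn4 e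
  rw [div_le_iff₀ hη] at hn2
  rw [div_le_iff₀ (by positivity)] at hn3
  rw [div_le_iff₀ hgap0] at hn4
  set r := Real.sqrt n with hr
  have hr0 : 0 < r := by linarith
  have hrn : r ^ 2 = n := Real.sq_sqrt (Nat.cast_nonneg n)
  have hn0 : (0 : ℝ) < n := hrn ▸ by positivity
  set b : ℝ := 1 / (n * (c / 2)) ^ 2 with hb
  have hb0 : 0 ≤ b := by positivity
  have hpoint : ∀ l : List Y, l.length = n → pathProb W e l ≠ 0 →
      heatPath (nu W) ξ r⁻¹ δ e (V + 2 * δ) (t - 2 * η) l -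
        (∑ q ∈ Q₀, b * (0 + pathSum (centredDensity W q) e l) ^ 2) - ε₁ ≤
      if pathProb W e l ≤ Real.exp (n * C + t * r) *
          (∑ q ∈ Q, (l.map q).prod) / Q.card then 1 else 0 := by
    intro l hl hl0
    have hsum0 : 0 ≤ ∑ q ∈ Q₀, b * (0 + pathSum (centredDensity W q) e l) ^ 2 :=
      Finset.sum_nonneg fun q _ => by positivity
    have hε₁0 : 0 ≤ ε₁ := gcdf_nonneg _
    have hle1 := heatPath_le_one (nu W) ξ r⁻¹ δ e (V + 2 * δ) (t - 2 * η) l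
    split_ifs with hlik
    · linarith
    rw [not_le] at hlik
    have hlne : l ≠ [] := by
      rintro rfl
      simp only [List.length_nil] at hl
      simp [← hl] at hn0
    have hlarge : ∀ q ∈ Q, n * C + t * r - Real.log Q.card <
        pathSum (fun x y => Real.log (W x y / q y)) e l := fun q hq =>
      lt_pathSum_of_mixture_lt hWn (fun q hq => (hQ q hq).1) hl0 hlik hq
    have hlargeξ : ∀ q ∈ Q, n * C + t * r - Real.log Q.card -
        pathSum (fun x _ => relDiv W q x) e l < pathSum (centredDensity W q) e l := by
      intro q hq
      have h1 := hlarge q hq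
      have h2 := pathSum_sub (fun x y => Real.log (W x y / q y)) (fun x _ => relDiv W q x) e l
      change pathSum (centredDensity W q) e l = _ at h2
      linarith
    have htype := isDist_inputType e hlne
    by_cases hfarl : δ ≤ |∑ x, inputType e l x * nu W x - V|
    · obtain ⟨q, hq, hqle⟩ := hfar _ htype hfarl
      have h1 := hlargeξ q (Finset.mem_insert_of_mem hq)
      rw [pathSum_eq_length_mul _ e hlne, hl] at h1
      have h2 : (n : ℝ) * (c / 2) ≤ pathSum (centredDensity W q) e l := by
        have h3 : (n : ℝ) * ∑ x, inputType e l x * relDiv W q x ≤ n * (C - c) := by gcongr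
        have h4 : (η - t) * r ≤ n * (c / 2) := by
          calc (η - t) * r ≤ r * (c / 2) * r := by gcongr
            _ = n * (c / 2) := by rw [← hrn]; ring
        nlinarith
      have h5 : 1 ≤ b * (0 + pathSum (centredDensity W q) e l) ^ 2 := by
        rw [hb, zero_add, one_div, inv_mul_eq_div, one_le_div (by positivity)]
        gcongr
      have h6 := Finset.single_le_sum
        (f := fun q => b * (0 + pathSum (centredDensity W q) e l) ^ 2)
        (fun q _ => by positivity) hq
      linarith
    · rw [not_le, abs_lt] at hfarl
      have hA : r⁻¹ ^ 2 * pathSum (fun x _ => nu W x) e l =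
          ∑ x, inputType e l x * nu W x := by
        rw [pathSum_eq_length_mul _ e hlne, hl, ← hrn]
        field_simp
      have hheat := heatPath_eq hnu0 ξ (τ := r⁻¹) (s₀ := δ) e (s := V + 2 * δ) (t - 2 * η)
        (l := l) (by rw [hA]; linarith)
      rw [hA] at hheat
      have h1 := hlargeξ (qStar W) (Finset.mem_insert_self _ _)
      have h2 : pathSum (fun x _ => relDiv W (qStar W) x) e l ≤ n * C := by
        refine (pathSum_mono (φ := fun _ _ => C) (fun x _ => hDle x) e l).trans ?_
        rw [pathSum_const, hl]
      have h3 : t - η ≤ r⁻¹ * pathSum ξ e l := by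
        rw [inv_mul_eq_div, le_div_iff₀ hr0]
        linarith
      have h4 : heatPath (nu W) ξ r⁻¹ δ e (V + 2 * δ) (t - 2 * η) l ≤ ε₁ := by
        rw [hheat, hε₁, heat]
        refine strictMono_gcdf.monotone ?_
        set s := V + 2 * δ - ∑ x, inputType e l x * nu W x with hs
        have hs0 : 0 < s := by linarith
        have hs3 : Real.sqrt s ≤ Real.sqrt (3 * δ) := Real.sqrt_le_sqrt (by linarith)
        have hss : 0 < Real.sqrt s := Real.sqrt_pos.2 hs0
        calc (t - 2 * η - r⁻¹ * pathSum ξ e l) / Real.sqrt s ≤ -η / Real.sqrt s := by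
              gcongr
              linarith
          _ ≤ -η / Real.sqrt (3 * δ) := by
              rw [neg_div, neg_div, neg_le_neg_iff]
              gcongr
      linarith
  refine le_trans ?_ (pathExp_mono hWn hpoint)
  rw [pathExp_sub, pathExp_sub, pathExp_const hW, pathExp_sum_mul]
  have hheat := heat_le_pathExp_heatPath hW hδ (sum_mul_centredDensity hW (qStar W)) hξB
    (inv_nonneg.2 hr0.le) (inv_le_one_of_one_le₀ hn1) n e (V + 2 * δ) (t - 2 * η)
  rw [← hnu, ← hK, ← hh₀] at hheat
  have hvar : ∑ q ∈ Q₀, b * pathExp W n e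
      (fun l => (0 + pathSum (centredDensity W q) e l) ^ 2) ≤ b * n * S := by
    rw [hS, Finset.mul_sum]
    refine Finset.sum_le_sum fun q _ => ?_
    rw [mul_assoc]
    refine mul_le_mul_of_nonneg_left ?_ hb0
    have := pathExp_sq_le hW (sum_mul_centredDensity hW q) (sum_mul_centredDensity_sq_le hW q) n e 0
    simpa using this
  have h1 : (n : ℝ) * (K * r⁻¹ ^ 3) = K / r := by
    rw [← hrn]
    field_simp
  have h2 : b * n * S ≤ S * (4 / c ^ 2) / r := by
    rw [hb, ← hrn]
    rw [show 1 / (r ^ 2 * (c / 2)) ^ 2 * r ^ 2 * S = S * (4 / c ^ 2) / (r * r) by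
      field_simp; ring]
    gcongr
    nlinarith
  have h3 : K / r + S * (4 / c ^ 2) / r ≤ gap := by
    rw [← add_div, div_le_iff₀ hr0]
    linarith
  rw [h1] at hheat
  linarith

omit [Fintype X] in
/-- Change of measure: a lower bound on the error probability of a feedback code in terms of a
mixture of product measures. -/
lemma le_errProb {W : X → Y → ℝ} (hW : IsChannel W) {Q : Finset (Y → ℝ)} (hQne : Q.Nonempty)
    (hQ : ∀ q ∈ Q, (∀ y, 0 < q y) ∧ ∑ y, q y = 1) {n M : ℕ} (hM : 0 < M) {a ε : ℝ} (ha : 0 ≤ a)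
    (h : ∀ e : List Y → X, ε ≤ pathExp W n e (fun l =>
      if pathProb W e l ≤ a * (∑ q ∈ Q, (l.map q).prod) / Q.card then 1 else 0))
    (enc : Fin M → List Y → X) (dec : (Fin n → Y) → Fin M) :
    ε - a / M ≤ errProb W n M enc dec := by
  have hWn : ∀ x y, 0 ≤ W x y := fun x y => (hW x).1 y
  have hM0 : (0 : ℝ) < M := by exact_mod_cast hM
  have hcard : (0 : ℝ) < Q.card := by exact_mod_cast Finset.card_pos.2 hQne
  set μ : (Fin n → Y) → ℝ := fun y => (∑ q ∈ Q, ((List.ofFn y).map q).prod) / Q.card with hμ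
  have hμ0 : ∀ y, 0 ≤ μ y := fun y => div_nonneg (Finset.sum_nonneg fun q hq =>
    List.prod_nonneg fun r hr => by
      obtain ⟨y, _, rfl⟩ := List.mem_map.1 hr
      exact ((hQ q hq).1 y).le) hcard.le
  have hμ1 : ∑ y, μ y = 1 := by
    simp_rw [hμ, ← Finset.sum_div]
    rw [Finset.sum_comm, div_eq_one_iff_eq hcard.ne']
    have : ∀ q ∈ Q, ∑ y : Fin n → Y, ((List.ofFn y).map q).prod = 1 := by
      intro q hq
      simp_rw [List.map_ofFn, List.prod_ofFn, Function.comp]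
      rw [← Fintype.piFinset_univ, ← Finset.prod_univ_sum]
      simp [(hQ q hq).2]
    rw [Finset.sum_congr rfl this]
    simp
  have hterm : ∀ (m : Fin M) (y : Fin n → Y),
      pathProb W (enc m) (List.ofFn y) * (if pathProb W (enc m) (List.ofFn y) ≤
        a * (∑ q ∈ Q, ((List.ofFn y).map q).prod) / Q.card then 1 else 0) -
        a * (if dec y = m then μ y else 0) ≤
      pathProb W (enc m) (List.ofFn y) * (if dec y = m then 0 else 1) := by
    intro m y
    have hp := pathProb_nonneg hWn (enc m) (List.ofFn y)
    have := mul_nonneg ha (hμ0 y)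
    rw [mul_div_assoc]
    change _ * (if _ ≤ a * μ y then (1 : ℝ) else 0) - _ ≤ _
    split_ifs <;> simp <;> linarith
  have hsum := Finset.sum_le_sum fun m (_ : m ∈ Finset.univ) =>
    Finset.sum_le_sum fun y (_ : y ∈ Finset.univ) => hterm m y
  simp_rw [Finset.sum_sub_distrib] at hsum
  have h1 : ∑ m : Fin M, ∑ y : Fin n → Y, a * (if dec y = m then μ y else 0) = a := by
    rw [Finset.sum_comm]
    simp [← Finset.mul_sum, hμ1]
  rw [h1] at hsum
  have h2 : (M : ℝ) * ε ≤ ∑ m : Fin M, ∑ y : Fin n → Y, pathProb W (enc m) (List.ofFn y) *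
      (if pathProb W (enc m) (List.ofFn y) ≤
        a * (∑ q ∈ Q, ((List.ofFn y).map q).prod) / Q.card then 1 else 0) := by
    calc (M : ℝ) * ε = ∑ _m : Fin M, ε := by simp
      _ ≤ _ := Finset.sum_le_sum fun m _ => by
        refine (h (enc m)).trans (le_of_eq ?_)
        rw [← sum_pathProb_mul]
  simp_rw [errProb, prod_take_eq_pathProb]
  rw [inv_mul_eq_div, le_div_iff₀ hM0, sub_mul, div_mul_cancel₀ _ hM0.ne']
  linarith

lemma nonempty_of_Vmin_pos {W : X → Y → ℝ} (hVmin : 0 < Vmin W) : Nonempty X := by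
  obtain ⟨P, hP, -⟩ := exists_achiever_qStar hVmin
  by_contra hne
  have := not_nonempty_iff.1 hne
  simpa using hP.2

omit [Fintype X] in
lemma le_minErr {W : X → Y → ℝ} [Nonempty X] {n : ℕ} {R b : ℝ}
    (h : ∀ enc dec, b ≤ errProb W n ⌈Real.exp (n * R)⌉₊ enc dec) : b ≤ minErr W n R := by
  have : NeZero ⌈Real.exp (n * R)⌉₊ := ⟨(Nat.ceil_pos.2 (Real.exp_pos _)).ne'⟩
  refine le_csInf ⟨_, fun _ _ => Classical.arbitrary X, fun _ => 0, rfl⟩ ?_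
  rintro _ ⟨enc, dec, rfl⟩
  exact h enc dec

/-- Above the Gaussian threshold no feedback code has error probability at most `ε`. -/
lemma eventually_lt_exp_of_minErr_le {W : X → Y → ℝ} (hW : IsChannel W) (hcol : NoZeroColumn W)
    (hVmin : 0 < Vmin W) (hsimple : Vmin W = Vmax W) {ε : ℝ} (hε0 : 0 < ε) (hε1 : ε < 1) {a : ℝ}
    (ha : Real.sqrt (Vmin W) * gcdfInv ε < a) :
    ∀ᶠ n : ℕ in atTop, ∀ R : ℝ, minErr W n R ≤ ε →
      (⌈Real.exp (n * R)⌉₊ : ℝ) < Real.exp (n * capacity W + a * Real.sqrt n) := by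
  have hne := nonempty_of_Vmin_pos hVmin
  obtain ⟨t, ht1, ht2⟩ := exists_between ha
  have hsV : 0 < Real.sqrt (Vmin W) := Real.sqrt_pos.2 hVmin
  have hεt : ε < gcdf (t / Real.sqrt (Vmin W)) := by
    refine (gcdf_gcdfInv hε0 hε1).symm.trans_lt ?_
    refine strictMono_gcdf ?_
    rw [lt_div_iff₀ hsV]
    linarith
  obtain ⟨Q, ε', hQne, hε', hQ, hev⟩ :=
    eventually_le_pathExp_mixture hW hcol hVmin hsimple hεt
  have hsqrt : Tendsto (fun n : ℕ => Real.sqrt n) atTop atTop :=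
    Real.tendsto_sqrt_atTop.comp tendsto_natCast_atTop_atTop
  have hexp : Tendsto (fun n : ℕ => Real.exp ((t - a) * Real.sqrt n)) atTop (𝓝 0) :=
    Real.tendsto_exp_atBot.comp (hsqrt.const_mul_atTop_of_neg (by linarith))
  filter_upwards [hev, hexp.eventually (gt_mem_nhds (sub_pos.2 hε'))] with n hn hsmall R hR
  by_contra hlarge
  rw [not_lt] at hlarge
  have hMpos : 0 < ⌈Real.exp (n * R)⌉₊ := Nat.ceil_pos.2 (Real.exp_pos _)
  have h1 := le_minErr fun enc dec => le_errProb hW hQne hQ hMpos (Real.exp_pos _).le hn enc dec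
  have h2 : Real.exp (n * capacity W + t * Real.sqrt n) / ⌈Real.exp (n * R)⌉₊ ≤
      Real.exp ((t - a) * Real.sqrt n) := by
    refine (div_le_div_of_nonneg_left (Real.exp_pos _).le (Real.exp_pos _) hlarge).trans
      (le_of_eq ?_)
    rw [← Real.exp_sub]
    congr 1
    ring
  linarith


/-! ### Achievability up to second order -/

/-- Feinstein's maximal code construction. -/
lemma exists_feinstein_code {A B : Type*} [Fintype A] [Fintype B] {w : A → B → ℝ} {p : A → ℝ}
    (hw : IsChannel w) (hp : IsDist p) {γ ε : ℝ} (hγ : 0 < γ) {T : A → Finset B}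
    (hT : ∀ a, ∀ b ∈ T a, γ * outDist p w b ≤ w a b) (k : ℕ)
    (hk : 1 - ε + k / γ ≤ ∑ a, p a * ∑ b ∈ T a, w a b) :
    ∃ (c : Fin k → A) (D : Fin k → Finset B), (∀ i j, i ≠ j → Disjoint (D i) (D j)) ∧
      (∀ i, D i ⊆ T (c i)) ∧ ∀ i, 1 - ε ≤ ∑ b ∈ D i, w (c i) b := by
  have hwn : ∀ a b, 0 ≤ w a b := fun a b => (hw a).1 b
  induction k with
  | zero => exact ⟨Fin.elim0, Fin.elim0, fun i => i.elim0, fun i => i.elim0, fun i => i.elim0⟩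
  | succ k ih =>
    have hkk : (k : ℝ) / γ < (k + 1 : ℕ) / γ := by
      gcongr
      simp
    obtain ⟨c, D, hdisj, hsub, hprob⟩ := ih (by linarith)
    set U : Finset B := Finset.univ.biUnion D with hU
    by_cases hex : ∃ a, 1 - ε ≤ ∑ b ∈ T a \ U, w a b
    · obtain ⟨a, ha⟩ := hex
      have hdU : ∀ i, Disjoint (T a \ U) (D i) := fun i =>
        Finset.disjoint_left.2 fun b hb hbi => (Finset.mem_sdiff.1 hb).2
          (Finset.mem_biUnion.2 ⟨i, Finset.mem_univ i, hbi⟩)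
      refine ⟨Fin.cons a c, Fin.cons (T a \ U) D, ?_, ?_, ?_⟩
      · intro i j hij
        refine Fin.cases (fun hij => ?_) (fun i hij => ?_) i hij <;>
        refine Fin.cases (fun hij => ?_) (fun j hij => ?_) j hij
        · exact absurd rfl hij
        · exact hdU j
        · exact (hdU i).symm
        · exact hdisj i j fun h => hij (congrArg Fin.succ h)
      · intro i
        refine Fin.cases ?_ (fun i => ?_) i
        · exact Finset.sdiff_subset
        · exact hsub i
      · intro i
        refine Fin.cases ?_ (fun i => ?_) i
        · exact ha
        · exact hprob i
    · exfalso
      simp only [not_exists, not_le] at hex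
      have h1 : ∀ a, ∑ b ∈ T a, w a b ≤ 1 - ε + ∑ b ∈ U, w a b := by
        intro a
        have h2 : ∑ b ∈ T a, w a b ≤ ∑ b ∈ (T a \ U) ∪ U, w a b :=
          Finset.sum_le_sum_of_subset_of_nonneg
            (by rw [Finset.sdiff_union_self_eq_union]; exact Finset.subset_union_left)
            fun b _ _ => hwn a b
        rw [Finset.sum_union Finset.sdiff_disjoint] at h2
        linarith [hex a]
      have h2 : ∑ a, p a * ∑ b ∈ T a, w a b ≤ 1 - ε + ∑ b ∈ U, outDist p w b := by
        calc _ ≤ ∑ a, p a * (1 - ε + ∑ b ∈ U, w a b) :=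
              Finset.sum_le_sum fun a _ => mul_le_mul_of_nonneg_left (h1 a) (hp.1 a)
          _ = _ := by
              simp_rw [mul_add, Finset.sum_add_distrib, ← Finset.sum_mul, hp.2, one_mul, outDist,
                Finset.mul_sum]
              rw [Finset.sum_comm]
      have h3 : ∑ b ∈ U, outDist p w b ≤ k / γ := by
        rw [hU, Finset.sum_biUnion fun i _ j _ hij => hdisj i j hij]
        have : ∀ i : Fin k, ∑ b ∈ D i, outDist p w b ≤ 1 / γ := by
          intro i
          rw [le_div_iff₀ hγ, mul_comm, Finset.mul_sum]
          calc ∑ b ∈ D i, γ * outDist p w b ≤ ∑ b ∈ D i, w (c i) b :=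
                Finset.sum_le_sum fun b hb => hT _ b (hsub i hb)
            _ ≤ ∑ b, w (c i) b := Finset.sum_le_univ_sum_of_nonneg fun b => hwn _ b
            _ = 1 := (hw _).2
        refine (Finset.sum_le_sum fun i _ => this i).trans (le_of_eq ?_)
        simp [div_eq_mul_inv]
      linarith

omit [Fintype X] in
lemma errProb_nonneg {W : X → Y → ℝ} (hW : IsChannel W) {n M : ℕ} (enc : Fin M → List Y → X)
    (dec : (Fin n → Y) → Fin M) : 0 ≤ errProb W n M enc dec := by
  refine mul_nonneg (by positivity) (Finset.sum_nonneg fun m _ => Finset.sum_nonneg fun y _ => ?_)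
  exact mul_nonneg (Finset.prod_nonneg fun k _ => (hW _).1 _) (by split_ifs <;> norm_num)

omit [Fintype X] in
lemma exists_rate_minErr_le {W : X → Y → ℝ} (hW : IsChannel W) {n M : ℕ} (hn : 0 < n)
    (hM : 0 < M) {enc : Fin M → List Y → X} {dec : (Fin n → Y) → Fin M} {ε : ℝ}
    (h : errProb W n M enc dec ≤ ε) :
    ∃ R : ℝ, ⌈Real.exp (n * R)⌉₊ = M ∧ minErr W n R ≤ ε := by
  have hn0 : (n : ℝ) ≠ 0 := by exact_mod_cast hn.ne'
  have hM0 : (0 : ℝ) < M := by exact_mod_cast hM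
  have hceil : ⌈Real.exp (n * (Real.log M / n))⌉₊ = M := by
    rw [mul_div_cancel₀ _ hn0, Real.exp_log hM0, Nat.ceil_natCast]
  refine ⟨Real.log M / n, hceil, ?_⟩
  rw [minErr, hceil]
  refine le_trans (csInf_le ?_ ⟨enc, dec, rfl⟩) h
  refine ⟨0, ?_⟩
  rintro _ ⟨enc, dec, rfl⟩
  exact errProb_nonneg hW enc dec

omit [Fintype X] in
lemma isChannel_prod {W : X → Y → ℝ} (hW : IsChannel W) (n : ℕ) :
    IsChannel fun (a : Fin n → X) (b : Fin n → Y) => ∏ k, W (a k) (b k) := by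
  refine fun a => ⟨fun b => Finset.prod_nonneg fun k _ => (hW _).1 _, ?_⟩
  rw [← Fintype.piFinset_univ, ← Finset.prod_univ_sum (fun _ => Finset.univ)
    (fun k y => W (a k) y)]
  simp [(hW _).2]

lemma isDist_prod {P : X → ℝ} (hP : IsDist P) (n : ℕ) :
    IsDist fun a : Fin n → X => ∏ k, P (a k) :=
  isChannel_prod (X := Unit) (W := fun _ => P) (fun _ => hP) n fun _ => ()

omit [Fintype Y] in
lemma outDist_prod (P : X → ℝ) (W : X → Y → ℝ) (n : ℕ) (b : Fin n → Y) :
    outDist (fun a : Fin n → X => ∏ k, P (a k)) (fun a b => ∏ k, W (a k) (b k)) b =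
      ∏ k, outDist P W (b k) := by
  simp_rw [outDist, Finset.prod_univ_sum, Fintype.piFinset_univ, Finset.prod_mul_distrib]

omit [Fintype X] [Fintype Y] in
lemma pathSum_ofFn (ψ : X → Y → ℝ) (n : ℕ) (e : List Y → X) (y : Fin n → Y) :
    pathSum ψ e (List.ofFn y) = ∑ k : Fin n, ψ (e ((List.ofFn y).take (k : ℕ))) (y k) := by
  induction n generalizing e with
  | zero => simp [pathSum]
  | succ n ih =>
    rw [Fin.sum_univ_succ, List.ofFn_succ, pathSum, ih]
    simp

/-- The second moment of a sum of independent centred variables. -/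
lemma sum_prod_mul_sum_sq_le {Z : Type*} [Fintype Z] {μ ψ : Z → ℝ} (hμ : IsDist μ)
    (hmean : ∑ z, μ z * ψ z = 0) (n : ℕ) :
    ∑ z : Fin n → Z, (∏ k, μ (z k)) * (∑ k, ψ (z k)) ^ 2 ≤ n * ∑ z, μ z * ψ z ^ 2 := by
  have h := pathExp_sq_le (X := Unit) (W := fun _ => μ) (ψ := fun _ => ψ) (fun _ => hμ)
    (fun _ => hmean) (fun _ => le_refl _) n (fun _ => ()) 0
  rw [← sum_pathProb_mul] at h
  simp_rw [← prod_take_eq_pathProb, pathSum_ofFn] at h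
  simpa using h

/-- Chebyshev's inequality for the information density of `n` channel uses. -/
lemma le_sum_typical {W : X → Y → ℝ} (hW : IsChannel W) {P : X → ℝ} (hP : IsDist P)
    (hpos : ∀ y, 0 < outDist P W y) {B : ℝ}
    (hB : ∑ z : X × Y, P z.1 * W z.1 z.2 *
      (Real.log (W z.1 z.2 / outDist P W z.2) - mutInfo P W) ^ 2 = B)
    {L : ℝ} (hL : 0 < L) {n : ℕ} (hn : 0 < n) :
    1 - B / L ^ 2 ≤ ∑ a : Fin n → X, (∏ k, P (a k)) *
      ∑ b ∈ Finset.univ.filter (fun b : Fin n → Y =>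
        Real.exp (n * mutInfo P W - L * Real.sqrt n) * ∏ k, outDist P W (b k) ≤
          ∏ k, W (a k) (b k)), ∏ k, W (a k) (b k) := by
  have hWn : ∀ x y, 0 ≤ W x y := fun x y => (hW x).1 y
  set I := mutInfo P W with hI
  set ψ : X × Y → ℝ := fun z => Real.log (W z.1 z.2 / outDist P W z.2) - I with hψ
  set μ : X × Y → ℝ := fun z => P z.1 * W z.1 z.2 with hμ
  have hμd : IsDist μ := by
    refine ⟨fun z => mul_nonneg (hP.1 _) (hWn _ _), ?_⟩
    rw [Fintype.sum_prod_type]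
    simp_rw [hμ, ← Finset.mul_sum, (hW _).2, mul_one, hP.2]
  have hmean : ∑ z, μ z * ψ z = 0 := by
    simp_rw [hψ, mul_sub, Finset.sum_sub_distrib, ← Finset.sum_mul, hμd.2, one_mul]
    rw [Fintype.sum_prod_type]
    exact sub_self _
  have h2 := sum_prod_mul_sum_sq_le hμd hmean n
  have hn0 : (0 : ℝ) < n := by exact_mod_cast hn
  have hterm : ∀ (a : Fin n → X) (b : Fin n → Y),
      (∏ k, P (a k)) * ∏ k, W (a k) (b k) -
        (∏ k, P (a k)) * (∏ k, W (a k) (b k)) * (∑ k, ψ (a k, b k)) ^ 2 / (L ^ 2 * n) ≤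
      (∏ k, P (a k)) * (if Real.exp (n * I - L * Real.sqrt n) * ∏ k, outDist P W (b k) ≤
          ∏ k, W (a k) (b k) then ∏ k, W (a k) (b k) else 0) := by
    intro a b
    have hp0 : 0 ≤ ∏ k, P (a k) := Finset.prod_nonneg fun k _ => hP.1 _
    have hw0 : 0 ≤ ∏ k, W (a k) (b k) := Finset.prod_nonneg fun k _ => hWn _ _
    split_ifs with hT
    · have : 0 ≤ (∏ k, P (a k)) * (∏ k, W (a k) (b k)) * (∑ k, ψ (a k, b k)) ^ 2 /
        (L ^ 2 * n) := by positivity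
      linarith
    rw [not_le] at hT
    rcases hw0.eq_or_lt with hw | hw
    · simp [← hw]
    have hwk : ∀ k, 0 < W (a k) (b k) := fun k =>
      (hWn _ _).lt_of_ne fun h => hw.ne' (Finset.prod_eq_zero (Finset.mem_univ k) h.symm)
    have hlog : ∑ k, ψ (a k, b k) < -(L * Real.sqrt n) := by
      have h3 := Real.log_lt_log hw hT
      rw [Real.log_mul (Real.exp_pos _).ne' (Finset.prod_pos fun k _ => hpos _).ne', Real.log_exp,
        Real.log_prod fun k _ => (hwk k).ne', Real.log_prod fun k _ => (hpos _).ne'] at h3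
      simp_rw [hψ, Finset.sum_sub_distrib,
        fun k => Real.log_div (hwk k).ne' (hpos (b k)).ne', Finset.sum_sub_distrib]
      simp
      linarith
    have hsq : L ^ 2 * n ≤ (∑ k, ψ (a k, b k)) ^ 2 := by
      rw [← Real.sq_sqrt hn0.le, ← mul_pow, ← neg_sq (∑ k, ψ (a k, b k))]
      have : 0 ≤ L * Real.sqrt n := by positivity
      exact pow_le_pow_left₀ this (by linarith) 2
    have h1 : 1 ≤ (∑ k, ψ (a k, b k)) ^ 2 / (L ^ 2 * n) := by
      rwa [one_le_div (by positivity)]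
    rw [mul_zero, mul_div_assoc, sub_nonpos]
    exact le_mul_of_one_le_right (by positivity) h1
  have hsum := Finset.sum_le_sum fun a (_ : a ∈ Finset.univ) =>
    Finset.sum_le_sum fun b (_ : b ∈ Finset.univ) => hterm a b
  simp_rw [Finset.sum_sub_distrib, ← Finset.mul_sum, (isChannel_prod hW n _).2, mul_one,
    (isDist_prod hP n).2, ← Finset.sum_filter] at hsum
  refine le_trans ?_ hsum
  have h3 : ∑ a : Fin n → X, ∑ b : Fin n → Y, (∏ k, P (a k)) * (∏ k, W (a k) (b k)) *
      (∑ k, ψ (a k, b k)) ^ 2 / (L ^ 2 * n) ≤ B / L ^ 2 := by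
    simp_rw [← Finset.sum_div]
    rw [div_le_div_iff₀ (by positivity) (by positivity)]
    rw [← (Equiv.arrowProdEquivProdArrow (Fin n) (fun _ => X) (fun _ => Y)).symm.sum_comp,
      Fintype.sum_prod_type, hB] at h2
    simp only [Equiv.arrowProdEquivProdArrow, Equiv.coe_fn_symm_mk, hμ,
      Finset.prod_mul_distrib] at h2
    calc _ ≤ n * B * L ^ 2 := by gcongr
      _ = _ := by ring
  linarith

/-- Codes of size `exp (nC - O(√n))` with error probability at most `ε` exist. -/
lemma exists_rate_ge {W : X → Y → ℝ} (hW : IsChannel W) (hcol : NoZeroColumn W)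
    (hVmin : 0 < Vmin W) {ε : ℝ} (hε0 : 0 < ε) :
    ∃ L : ℝ, ∀ n : ℕ, 0 < n → ∃ R : ℝ, minErr W n R ≤ ε ∧
      Real.exp (n * capacity W - L * Real.sqrt n) * (ε / 4) ≤ ⌈Real.exp (n * R)⌉₊ := by
  have hne := nonempty_of_Vmin_pos hVmin
  have hWn : ∀ x y, 0 ≤ W x y := fun x y => (hW x).1 y
  obtain ⟨P, hP, hPC, -⟩ := exists_achiever_qStar hVmin
  have hpos := outDist_pos_of_achiever hW hcol hP hPC
  obtain ⟨B, hB⟩ : ∃ B, ∑ z : X × Y, P z.1 * W z.1 z.2 *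
      (Real.log (W z.1 z.2 / outDist P W z.2) - mutInfo P W) ^ 2 = B := ⟨_, rfl⟩
  have hB0 : 0 ≤ B := hB ▸ Finset.sum_nonneg fun z _ =>
    mul_nonneg (mul_nonneg (hP.1 _) (hWn _ _)) (sq_nonneg _)
  set L := Real.sqrt ((B + 1) / (ε / 2)) with hL
  have hL0 : 0 < L := Real.sqrt_pos.2 (by positivity)
  have hBL : B / L ^ 2 ≤ ε / 2 := by
    rw [hL, Real.sq_sqrt (by positivity), div_div_eq_mul_div, div_le_iff₀ (by positivity)]
    nlinarith
  refine ⟨L, fun n hn => ?_⟩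
  set γ := Real.exp (n * capacity W - L * Real.sqrt n) with hγ
  have hγ0 : 0 < γ := Real.exp_pos _
  rcases lt_or_ge (γ * (ε / 2)) 1 with hsmall | hbig
  · obtain ⟨R, hR, hle⟩ := exists_rate_minErr_le hW hn one_pos (ε := ε)
      (enc := fun _ _ => Classical.arbitrary X) (dec := fun _ => 0)
      (by simp [errProb, Subsingleton.elim _ (0 : Fin 1), hε0.le])
    refine ⟨R, hle, ?_⟩
    rw [hR]
    push_cast
    nlinarith
  set M := ⌊γ * (ε / 2)⌋₊ with hM
  have hM0 : 0 < M := Nat.floor_pos.2 hbig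
  have hMle : (M : ℝ) ≤ γ * (ε / 2) := Nat.floor_le (by positivity)
  have hMge : γ * (ε / 4) ≤ M := by
    have h1 := Nat.lt_floor_add_one (γ * (ε / 2))
    have h2 : (1 : ℝ) ≤ M := by exact_mod_cast hM0
    rw [← hM] at h1
    linarith
  have htyp := le_sum_typical hW hP hpos hB hL0 hn
  rw [hPC, ← hγ] at htyp
  obtain ⟨c, D, hdisj, -, hprob⟩ := exists_feinstein_code (isChannel_prod hW n) (isDist_prod hP n)
    (ε := ε) hγ0 (T := fun a => Finset.univ.filter fun b : Fin n → Y =>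
      γ * ∏ k, outDist P W (b k) ≤ ∏ k, W (a k) (b k))
    (fun a b hb => by rw [outDist_prod]; exact (Finset.mem_filter.1 hb).2) M (by
      refine le_trans ?_ htyp
      have : (M : ℝ) / γ ≤ ε / 2 := by
        rw [div_le_iff₀ hγ0]
        linarith
      linarith)
  have : NeZero M := ⟨hM0.ne'⟩
  set enc : Fin M → List Y → X := fun m l =>
    if h : l.length < n then c m ⟨l.length, h⟩ else Classical.arbitrary X with henc
  set dec : (Fin n → Y) → Fin M := fun y => if h : ∃ m, y ∈ D m then h.choose else 0 with hdec
  have hdec_eq : ∀ m, ∀ y ∈ D m, dec y = m := by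
    intro m y hy
    have hex : ∃ m, y ∈ D m := ⟨m, hy⟩
    simp only [hdec, dif_pos hex]
    by_contra hne
    exact Finset.disjoint_left.1 (hdisj _ _ hne) hex.choose_spec hy
  have henc_eq : ∀ m (y : Fin n → Y) (k : Fin n), enc m ((List.ofFn y).take (k : ℕ)) = c m k := by
    intro m y k
    simp [henc]
  have herr : errProb W n M enc dec ≤ ε := by
    simp_rw [errProb, henc_eq]
    rw [inv_mul_le_iff₀ (by exact_mod_cast hM0)]
    have hm : ∀ m, ∑ y : Fin n → Y, (∏ k, W (c m k) (y k)) * (if dec y = m then 0 else 1) ≤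
        ε := by
      intro m
      have h1 := (isChannel_prod hW n (c m)).2
      have h2 : ∑ y : Fin n → Y, (∏ k, W (c m k) (y k)) * (if dec y = m then 0 else 1) ≤
          ∑ y ∈ (D m)ᶜ, ∏ k, W (c m k) (y k) := by
        rw [← Finset.sum_subset (Finset.subset_univ (D m)ᶜ)]
        · refine Finset.sum_le_sum fun y _ => ?_
          have : 0 ≤ ∏ k, W (c m k) (y k) := Finset.prod_nonneg fun k _ => hWn _ _
          split_ifs <;> simp [this]
        · intro y _ hy
          rw [hdec_eq m y (by simpa using hy)]
          simp
      have h3 := Finset.sum_add_sum_compl (D m) fun y : Fin n → Y => ∏ k, W (c m k) (y k)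
      have := hprob m
      linarith
    refine (Finset.sum_le_sum fun m _ => hm m).trans (le_of_eq ?_)
    simp
  obtain ⟨R, hR, hle⟩ := exists_rate_minErr_le hW hn hM0 herr
  exact ⟨R, hle, by rwa [hR]⟩

/-- Theorem 3 (Feedback does not improve the second-order coding rate for
simple-dispersion channels). -/
theorem feedback_no_improvement_simple_dispersion
    {X Y : Type*} [Fintype X] [Fintype Y]
    (W : X → Y → ℝ) (hW : IsChannel W) (hcol : NoZeroColumn W)
    (hVmin : 0 < Vmin W) (hsimple : Vmin W = Vmax W) :
    ∀ ε : ℝ, 0 < ε → ε < 1 →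
      Filter.limsup (fun n : ℕ =>
          (Real.log (Mfb W n ε) - n * capacity W) / Real.sqrt n) Filter.atTop ≤
        Real.sqrt (Vmin W) * gcdfInv ε ∧
      Real.sqrt (Vmin W) * gcdfInv ε = Real.sqrt (Veps W ε) * gcdfInv ε := by
  intro ε hε0 hε1
  obtain ⟨L, hL⟩ := exists_rate_ge hW hcol hVmin hε0
  have hbounds : ∀ a, Real.sqrt (Vmin W) * gcdfInv ε < a → ∀ᶠ n : ℕ in atTop,
      -L - |Real.log (ε / 4)| ≤ (Real.log (Mfb W n ε) - n * capacity W) / Real.sqrt n ∧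
        (Real.log (Mfb W n ε) - n * capacity W) / Real.sqrt n ≤ a := by
    intro a ha
    filter_upwards [eventually_lt_exp_of_minErr_le hW hcol hVmin hsimple hε0 hε1 ha,
      eventually_ge_atTop 1] with n hn hn1
    have hsqrt : 1 ≤ Real.sqrt n := Real.one_le_sqrt.2 (by exact_mod_cast hn1)
    have hsqrt0 : 0 < Real.sqrt n := by linarith
    obtain ⟨R, hR, hRM⟩ := hL n hn1
    have hub : ∀ m ∈ {m | ∃ R : ℝ, m = (⌈Real.exp (n * R)⌉₊ : ℝ) ∧ minErr W n R ≤ ε},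
        m ≤ Real.exp (n * capacity W + a * Real.sqrt n) := by
      rintro _ ⟨R, rfl, hR⟩
      exact (hn R hR).le
    have hle : Mfb W n ε ≤ Real.exp (n * capacity W + a * Real.sqrt n) :=
      csSup_le ⟨_, R, rfl, hR⟩ hub
    have hge : Real.exp (n * capacity W - L * Real.sqrt n) * (ε / 4) ≤ Mfb W n ε :=
      hRM.trans (le_csSup ⟨_, hub⟩ ⟨R, rfl, hR⟩)
    have hlow : 0 < Real.exp (n * capacity W - L * Real.sqrt n) * (ε / 4) := by positivity
    have hloglow := Real.log_le_log hlow hge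
    have hlogup := Real.log_le_log (hlow.trans_le hge) hle
    rw [Real.log_exp] at hlogup
    rw [Real.log_mul (Real.exp_pos _).ne' (by positivity), Real.log_exp] at hloglow
    rw [le_div_iff₀ hsqrt0, div_le_iff₀ hsqrt0]
    refine ⟨?_, by linarith⟩
    have := neg_abs_le (Real.log (ε / 4))
    nlinarith [abs_nonneg (Real.log (ε / 4))]
  refine ⟨?_, by rw [Veps, ← hsimple, ite_self]⟩
  refine le_of_forall_gt_imp_ge_of_dense fun a ha => ?_
  exact limsup_le_of_le (isCoboundedUnder_le_of_eventually_le atTop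
    ((hbounds a ha).mono fun _ h => h.1)) ((hbounds a ha).mono fun _ h => h.2)

end Paper
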